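/- arXiv:1805.07686 — 2 statements merged into one kernel-verified Lean document; each statement's English description precedes it below -/
import Mathlib

section
/- (Lemma 6.4, unbounded case, in explicit form.) Fix an integer k ≥ 1. If S is unbounded (F̄(x) > 0 for all x > 0) and the tail of S has upper Matuszewska index less than −2, expressed via the equivalent Potter-type bound — there exist constants C > 0, ε > 0 and x₀ > 0 such that F̄(γx) ≤ C·γ^{−(2+ε)}·F̄(x) for all x ≥ x₀ and all γ ≥ 1 — then the paper's k-server SRPT response-time bound is asymptotically tight against the single-server SRPT mean response time in heavy traffic: lim_{λ → (1/m)⁻} (∫₀^∞ H_λ(x)·f(x) dx) / T̄(λ) = 1. -/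
open MeasureTheory Filter

/-- Relevant load `ρ_{≤x} = λ ∫₀^x t f(t) dt`. -/
noncomputable def rhoLe (f : ℝ → ℝ) (lam x : ℝ) : ℝ :=
  lam * ∫ t in (0:ℝ)..x, t * f t

/-- Tail of the service requirement distribution, `F̄(x) = ∫_x^∞ f(t) dt`. -/
noncomputable def tailS (f : ℝ → ℝ) (x : ℝ) : ℝ :=
  ∫ t in Set.Ioi x, f t

/-- Schrage's exact formula `T̄_λ(x)` for the mean response time of a size-`x`
job in an M/G/1 queue under SRPT. -/
noncomputable def Tsrpt1 (f : ℝ → ℝ) (lam x : ℝ) : ℝ :=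
  (lam * (∫ t in (0:ℝ)..x, t ^ 2 * f t) + lam * x ^ 2 * tailS f x)
      / (2 * (1 - rhoLe f lam x) ^ 2)
    + ∫ t in (0:ℝ)..x, 1 / (1 - rhoLe f lam t)

/-- Overall M/G/1 SRPT mean response time `T̄(λ) = ∫₀^∞ T̄_λ(x) f(x) dx`. -/
noncomputable def TsrptMean (f : ℝ → ℝ) (lam : ℝ) : ℝ :=
  ∫ x in Set.Ioi (0:ℝ), Tsrpt1 f lam x * f x

/-- The paper's simple upper bound `H_λ(x)` on the mean response time of a
size-`x` job under `k`-server SRPT. -/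
noncomputable def Hbound (f : ℝ → ℝ) (k : ℕ) (lam x : ℝ) : ℝ :=
  (lam * (∫ t in (0:ℝ)..x, t ^ 2 * f t) + lam * x ^ 2 * tailS f x)
      / (2 * (1 - rhoLe f lam x) ^ 2)
    + 2 * (k : ℝ) * x / (1 - rhoLe f lam x)

/-!
Split the SRPT mean response time into waiting and residence time, `T = W + R`, and the bound into
`H = W + 2k B` with `B` the mean of `x / (1 - ρ_{≤x})`. Since `0 ≤ R ≤ B`, it suffices to show that
`B` is negligible against `W` as `ρ → 1`. Because `d ρ_{≤x} = λ x f(x) dx`, the mean `B` equals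
`log (1 / (1 - ρ)) / λ` exactly, so it diverges. On the other hand
`1 - ρ_{≤x} = (1 - ρ) + λ E[S; S > x]`, and the tail condition gives `x E[S; S > x] → 0`, so
`x (1 - ρ_{≤x})` is small for all large `x` up to a small multiple of `1 / (1 - ρ)`; there the
integrand of `B` is at most `η` times that of `W`. The remaining sizes contribute only a bounded
amount to `B`, whence `B ≤ η W + O(1)` for every `η > 0`.
-/

open scoped Topology NNReal

lemma le_of_le_comp_two_mul_of_tendsto {g : ℝ → ℝ} {a x L : ℝ} (ha : 0 < a) (hx : a ≤ x)
    (hg : ∀ y ≥ a, g y ≤ g (2 * y)) (hlim : Tendsto g atTop (𝓝 L)) : g x ≤ L := by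
  have h_iter (n : ℕ) : g x ≤ g (2 ^ n * x) := by
    induction n with
    | zero => simp
    | succ n ih =>
      have h_ge : a ≤ 2 ^ n * x :=
        hx.trans (le_mul_of_one_le_left (ha.trans_le hx).le (one_le_pow₀ one_le_two))
      calc g x ≤ g (2 ^ n * x) := ih
        _ ≤ g (2 * (2 ^ n * x)) := hg _ h_ge
        _ = g (2 ^ (n + 1) * x) := by ring_nf
  have h_top : Tendsto (fun n : ℕ => (2 : ℝ) ^ n * x) atTop atTop :=
    (tendsto_pow_atTop_atTop_of_one_lt one_lt_two).atTop_mul_const (ha.trans_le hx)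
  exact ge_of_tendsto' (hlim.comp h_top) h_iter

lemma tendsto_sq_mul_atTop_zero_of_le_rpow {F : ℝ → ℝ} {C ε x₀ : ℝ} (hF : ∀ x, 0 ≤ F x)
    (hε : 0 < ε) (hx₀ : 0 < x₀) (h : ∀ γ ≥ (1 : ℝ), F (γ * x₀) ≤ C * γ ^ (-(2 + ε))) :
    Tendsto (fun x => x ^ 2 * F x) atTop (𝓝 0) := by
  have h_lim : Tendsto (fun x => C * x₀ ^ 2 * (x / x₀) ^ (-ε)) atTop (𝓝 0) := by
    simpa using ((tendsto_rpow_neg_atTop hε).comp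
      (tendsto_id.atTop_div_const hx₀)).const_mul (C * x₀ ^ 2)
  refine squeeze_zero' (.of_forall fun x => mul_nonneg (sq_nonneg x) (hF x)) ?_ h_lim
  filter_upwards [eventually_ge_atTop x₀] with x hx
  have hγ : 0 < x / x₀ := div_pos (hx₀.trans_le hx) hx₀
  have h_bound := h (x / x₀) ((one_le_div hx₀).2 hx)
  rw [div_mul_cancel₀ _ hx₀.ne', neg_add, Real.rpow_add hγ, Real.rpow_neg hγ.le 2,
    Real.rpow_two] at h_bound
  calc x ^ 2 * F x
      ≤ x ^ 2 * (C * (((x / x₀) ^ 2)⁻¹ * (x / x₀) ^ (-ε))) := by gcongr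
    _ = C * x₀ ^ 2 * (x / x₀) ^ (-ε) := by
      have := (hx₀.trans_le hx).ne'
      field_simp

lemma isLittleO_of_tendsto_atTop_of_le_mul_add {α : Type*} {l : Filter α} {u v : α → ℝ}
    (hu : Tendsto u l atTop) (h : ∀ η > 0, ∃ K, ∀ᶠ a in l, u a ≤ η * v a + K) : u =o[l] v := by
  refine Asymptotics.isLittleO_iff.2 fun c hc => ?_
  obtain ⟨K, hK⟩ := h (c / 2) (half_pos hc)
  filter_upwards [hK, hu.eventually_ge_atTop (2 * K), hu.eventually_ge_atTop 0] with a h_le hKu h0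
  have h_abs : c / 2 * v a ≤ c / 2 * |v a| := by gcongr; exact le_abs_self _
  rw [Real.norm_of_nonneg h0, Real.norm_eq_abs]
  linarith

lemma tendsto_add_div_add_one_of_isLittleO {α : Type*} {l : Filter α} {u p q : α → ℝ}
    (hu : ∀ᶠ a in l, u a ≠ 0) (hp : p =o[l] u) (hq : q =o[l] u) :
    Tendsto (fun a => (u a + p a) / (u a + q a)) l (𝓝 1) := by
  have h_lim : Tendsto (fun a => (1 + p a / u a) / (1 + q a / u a)) l (𝓝 ((1 + 0) / (1 + 0))) :=
    (hp.tendsto_div_nhds_zero.const_add 1).div (hq.tendsto_div_nhds_zero.const_add 1) (by norm_num)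
  rw [add_zero, div_one] at h_lim
  refine h_lim.congr' (hu.mono fun a ha => ?_)
  rw [one_add_div ha, one_add_div ha, div_div_div_cancel_right₀ ha]

lemma continuous_integral_Ioi {g : ℝ → ℝ} (hg : Integrable g) :
    Continuous fun x => ∫ t in Set.Ioi x, g t := by
  have h_eq : (fun x => ∫ t in Set.Ioi x, g t) =
      fun x => (∫ t in Set.Ioi 0, g t) - ∫ t in (0 : ℝ)..x, g t := by
    funext x
    rw [← intervalIntegral.integral_Ioi_sub_Ioi' hg.integrableOn hg.integrableOn, sub_sub_cancel]
  rw [h_eq]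
  exact continuous_const.sub
    (intervalIntegral.continuous_primitive (fun _ _ => hg.intervalIntegrable) 0)

lemma antitone_integral_Ioi {g : ℝ → ℝ} (hg : Integrable g) (hg0 : ∀ t, 0 ≤ g t) :
    Antitone fun x => ∫ t in Set.Ioi x, g t := fun _ _ hxy =>
  setIntegral_mono_set hg.integrableOn (ae_of_all _ hg0) (Set.Ioi_subset_Ioi hxy).eventuallyLE

lemma lipschitzOnWith_log_Ici {l : ℝ} (hl : 0 < l) :
    LipschitzOnWith (Real.toNNReal l⁻¹) Real.log (Set.Ici l) := by
  refine (convex_Ici l).lipschitzOnWith_of_nnnorm_deriv_le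
    (fun x hx => Real.differentiableAt_log (hl.trans_le hx).ne') fun x hx => ?_
  have hx0 : 0 < x := hl.trans_le hx
  rw [Real.deriv_log, ← NNReal.coe_le_coe, coe_nnnorm, Real.norm_of_nonneg (inv_nonneg.2 hx0.le),
    Real.coe_toNNReal _ (inv_nonneg.2 hl.le)]
  exact inv_anti₀ hl hx

lemma absolutelyContinuousOnInterval_lipschitzOnWith_comp {X Y : Type*} [PseudoMetricSpace X]
    [PseudoMetricSpace Y] {φ : X → Y} {u : ℝ → X} {K : ℝ≥0} {s : Set X} {a b : ℝ}
    (hφ : LipschitzOnWith K φ s) (hu : AbsolutelyContinuousOnInterval u a b)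
    (hus : Set.MapsTo u (Set.uIcc a b) s) : AbsolutelyContinuousOnInterval (φ ∘ u) a b := by
  have h_lim : Tendsto (fun E : ℕ × (ℕ → ℝ × ℝ) =>
      K * ∑ i ∈ Finset.range E.1, dist (u (E.2 i).1) (u (E.2 i).2))
      (AbsolutelyContinuousOnInterval.totalLengthFilter ⊓
        𝓟 (AbsolutelyContinuousOnInterval.disjWithin a b)) (𝓝 0) := by
    simpa using Tendsto.const_mul (K : ℝ) hu
  refine squeeze_zero' (.of_forall fun E => Finset.sum_nonneg fun _ _ => dist_nonneg) ?_ h_lim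
  filter_upwards [mem_inf_of_right (mem_principal_self _)] with E hE
  rw [Finset.mul_sum]
  exact Finset.sum_le_sum fun i hi =>
    hφ.dist_le_mul _ (hus (hE.1 i hi).1) _ (hus (hE.1 i hi).2)

lemma integral_div_const_sub_primitive {g : ℝ → ℝ} {a b c : ℝ}
    (hg : IntervalIntegrable g volume a b)
    (hpos : ∀ x ∈ Set.uIcc a b, 0 < c - ∫ t in a..x, g t) :
    ∫ x in a..b, g x / (c - ∫ t in a..x, g t) = Real.log c - Real.log (c - ∫ t in a..b, g t) := by
  let u : ℝ → ℝ := fun x => c - ∫ t in a..x, g t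
  have h_const : AbsolutelyContinuousOnInterval (fun _ : ℝ => c) a b :=
    (LipschitzWith.const c).lipschitzOnWith.absolutelyContinuousOnInterval
  have hu_ac : AbsolutelyContinuousOnInterval u a b :=
    h_const.sub (hg.absolutelyContinuousOnInterval_intervalIntegral Set.left_mem_uIcc)
  obtain ⟨l, hl, hul⟩ := isCompact_uIcc.exists_forall_le' hu_ac.continuousOn hpos
  have h_log_ac : AbsolutelyContinuousOnInterval (Real.log ∘ u) a b :=
    absolutelyContinuousOnInterval_lipschitzOnWith_comp (lipschitzOnWith_log_Ici hl) hu_ac hul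
  have h_deriv : ∀ᵐ x, x ∈ Set.uIoc a b → g x / u x = -deriv (Real.log ∘ u) x := by
    filter_upwards [hg.ae_hasDerivAt_integral] with x hx hxab
    have hxab' := Set.uIoc_subset_uIcc hxab
    have hu_deriv : HasDerivAt u (-g x) x := (hx hxab' a Set.left_mem_uIcc).const_sub c
    have h_log_deriv : HasDerivAt (Real.log ∘ u) (-g x / u x) x :=
      hu_deriv.log (hpos x hxab').ne'
    rw [h_log_deriv.deriv, neg_div, neg_neg]
  calc ∫ x in a..b, g x / u x = ∫ x in a..b, -deriv (Real.log ∘ u) x :=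
        intervalIntegral.integral_congr_ae h_deriv
    _ = Real.log (u a) - Real.log (u b) := by
      rw [intervalIntegral.integral_neg, h_log_ac.integral_deriv_eq_sub, neg_sub]
      rfl
    _ = Real.log c - Real.log (u b) := by simp only [u, intervalIntegral.integral_same, sub_zero]

/-- The density `f` of a service requirement: a probability distribution on `(0, ∞)` with finite
mean. -/
structure IsServiceDensity (f : ℝ → ℝ) : Prop where
  measurable : Measurable f
  nonneg : ∀ x, 0 ≤ f x
  eq_zero_of_nonpos : ∀ x ≤ 0, f x = 0
  integral_eq_one : ∫ t in Set.Ioi (0 : ℝ), f t = 1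
  integrableOn_id_mul : IntegrableOn (fun t => t * f t) (Set.Ioi 0)

/-- The expectation `E[g(S)]` over the service requirement `S > 0` with density `f`. -/
noncomputable def sizeMean (f g : ℝ → ℝ) : ℝ :=
  ∫ x in Set.Ioi (0 : ℝ), g x * f x

/-- The contribution `E[S; S > x]` of jobs larger than `x` to the mean service requirement. In
particular `tailMean f 0` is the mean `m`. -/
noncomputable def tailMean (f : ℝ → ℝ) (x : ℝ) : ℝ :=
  ∫ t in Set.Ioi x, t * f t

/-- The second moment `E[min(S, x)²]` of the service requirement capped at `x`. -/
noncomputable def cappedSqMean (f : ℝ → ℝ) (x : ℝ) : ℝ :=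
  (∫ t in (0 : ℝ)..x, t ^ 2 * f t) + x ^ 2 * tailS f x

/-- The mean waiting time of a job of size `x` under single-server SRPT. -/
noncomputable def waitingTime (f : ℝ → ℝ) (lam x : ℝ) : ℝ :=
  lam * cappedSqMean f x / (2 * (1 - rhoLe f lam x) ^ 2)

/-- The mean residence time of a job of size `x` under single-server SRPT. -/
noncomputable def residenceTime (f : ℝ → ℝ) (lam x : ℝ) : ℝ :=
  ∫ t in (0 : ℝ)..x, 1 / (1 - rhoLe f lam t)

/-- The mean length of a busy period of jobs of size at most `x` started by work `x`. -/
noncomputable def busyPeriod (f : ℝ → ℝ) (lam x : ℝ) : ℝ :=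
  x / (1 - rhoLe f lam x)

lemma Tsrpt1_eq_waitingTime_add_residenceTime (f : ℝ → ℝ) (lam x : ℝ) :
    Tsrpt1 f lam x = waitingTime f lam x + residenceTime f lam x := by
  rw [Tsrpt1, waitingTime, residenceTime, cappedSqMean, mul_add, mul_assoc lam (x ^ 2)]

lemma Hbound_eq_waitingTime_add_busyPeriod (f : ℝ → ℝ) (k : ℕ) (lam x : ℝ) :
    Hbound f k lam x = waitingTime f lam x + 2 * k * busyPeriod f lam x := by
  rw [Hbound, waitingTime, busyPeriod, cappedSqMean, mul_add, mul_assoc lam (x ^ 2), mul_div_assoc]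

lemma tendsto_tailMean (f : ℝ → ℝ) : Tendsto (tailMean f) atTop (𝓝 0) :=
  tendsto_integral_Ioi_zero tendsto_id

namespace IsServiceDensity

variable {f : ℝ → ℝ} {lam x : ℝ}

section Tails

lemma support_subset (hf : IsServiceDensity f) : Function.support f ⊆ Set.Ioi 0 := fun x hx =>
  Set.mem_Ioi.2 (lt_of_not_ge fun hx0 => hx (hf.eq_zero_of_nonpos x hx0))

lemma integrable (hf : IsServiceDensity f) : Integrable f :=
  (integrableOn_iff_integrable_of_support_subset hf.support_subset).1
    (.of_integral_ne_zero (hf.integral_eq_one.trans_ne one_ne_zero))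

lemma integrable_id_mul (hf : IsServiceDensity f) : Integrable fun t => t * f t :=
  (integrableOn_iff_integrable_of_support_subset
    ((Function.support_mul_subset_right _ _).trans hf.support_subset)).1 hf.integrableOn_id_mul

lemma intervalIntegrable_sq_mul (hf : IsServiceDensity f) (a b : ℝ) :
    IntervalIntegrable (fun t => t ^ 2 * f t) volume a b :=
  hf.integrable.intervalIntegrable.continuousOn_mul (continuous_pow 2).continuousOn

lemma id_mul_nonneg (hf : IsServiceDensity f) (t : ℝ) : 0 ≤ t * f t := by
  rcases le_total t 0 with ht | ht
  · rw [hf.eq_zero_of_nonpos t ht, mul_zero]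
  · exact mul_nonneg ht (hf.nonneg t)

lemma tailS_nonneg (hf : IsServiceDensity f) (x : ℝ) : 0 ≤ tailS f x :=
  integral_nonneg hf.nonneg

lemma tailMean_nonneg (hf : IsServiceDensity f) (x : ℝ) : 0 ≤ tailMean f x :=
  integral_nonneg hf.id_mul_nonneg

lemma antitone_tailS (hf : IsServiceDensity f) : Antitone (tailS f) :=
  antitone_integral_Ioi hf.integrable hf.nonneg

lemma antitone_tailMean (hf : IsServiceDensity f) : Antitone (tailMean f) :=
  antitone_integral_Ioi hf.integrable_id_mul hf.id_mul_nonneg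

lemma continuous_tailMean (hf : IsServiceDensity f) : Continuous (tailMean f) :=
  continuous_integral_Ioi hf.integrable_id_mul

lemma tailS_sub_tailS (hf : IsServiceDensity f) (a b : ℝ) :
    tailS f a - tailS f b = ∫ t in a..b, f t :=
  intervalIntegral.integral_Ioi_sub_Ioi' hf.integrable.integrableOn hf.integrable.integrableOn

lemma tailMean_sub_tailMean (hf : IsServiceDensity f) (a b : ℝ) :
    tailMean f a - tailMean f b = ∫ t in a..b, t * f t :=
  intervalIntegral.integral_Ioi_sub_Ioi' hf.integrable_id_mul.integrableOn
    hf.integrable_id_mul.integrableOn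

lemma mul_tailS_le_tailMean (hf : IsServiceDensity f) (x : ℝ) : x * tailS f x ≤ tailMean f x := by
  rw [tailS, tailMean, ← integral_const_mul]
  exact setIntegral_mono_on (hf.integrable.const_mul x).integrableOn
    hf.integrable_id_mul.integrableOn measurableSet_Ioi
    fun t ht => mul_le_mul_of_nonneg_right (le_of_lt ht) (hf.nonneg t)

lemma exists_pos_tailS_pos (hf : IsServiceDensity f) : ∃ a > 0, 0 < tailS f a := by
  have h_zero : 0 < tailS f 0 := one_pos.trans_eq hf.integral_eq_one.symm
  have h_near : ∀ᶠ a in 𝓝[>] 0, 0 < tailS f a :=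
    ((continuous_integral_Ioi hf.integrable).tendsto 0).eventually_const_lt h_zero
      |>.filter_mono nhdsWithin_le_nhds
  exact (h_near.and self_mem_nhdsWithin).exists.imp fun _ => And.symm

lemma tailMean_zero_pos (hf : IsServiceDensity f) : 0 < tailMean f 0 := by
  obtain ⟨a, ha, h_tail⟩ := hf.exists_pos_tailS_pos
  calc 0 < a * tailS f a := mul_pos ha h_tail
    _ ≤ tailMean f a := hf.mul_tailS_le_tailMean a
    _ ≤ tailMean f 0 := hf.antitone_tailMean ha.le

lemma tailMean_le_add_tailMean_two_mul (hf : IsServiceDensity f) (hx : 0 ≤ x) :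
    tailMean f x ≤ 2 * x * tailS f x + tailMean f (2 * x) := by
  have h_le : tailMean f x - tailMean f (2 * x) ≤ 2 * x * (tailS f x - tailS f (2 * x)) := by
    rw [hf.tailMean_sub_tailMean, hf.tailS_sub_tailS, ← intervalIntegral.integral_const_mul]
    exact intervalIntegral.integral_mono_on (by linarith) hf.integrable_id_mul.intervalIntegrable
      (hf.integrable.const_mul _).intervalIntegrable
      fun t ht => mul_le_mul_of_nonneg_right ht.2 (hf.nonneg t)
  have h_nonneg : 0 ≤ 2 * x * tailS f (2 * x) := mul_nonneg (by linarith) (hf.tailS_nonneg _)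
  linarith

lemma mul_tailMean_le_of_sq_mul_tailS_le (hf : IsServiceDensity f) {κ a : ℝ} (ha : 0 < a)
    (h : ∀ y ≥ a, y ^ 2 * tailS f y ≤ κ) (hx : a ≤ x) : x * tailMean f x ≤ 4 * κ := by
  have h_lim : Tendsto (fun y => tailMean f y - 4 * κ / y) atTop (𝓝 0) := by
    simpa using (tendsto_tailMean f).sub (tendsto_const_nhds.div_atTop tendsto_id)
  have h_double : ∀ y ≥ a, tailMean f y - 4 * κ / y ≤ tailMean f (2 * y) - 4 * κ / (2 * y) := by
    intro y hy
    have hy0 : 0 < y := ha.trans_le hy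
    have h_tail : 2 * y * tailS f y ≤ 2 * κ / y := by
      rw [le_div_iff₀ hy0]
      linarith [h y hy]
    have h_half : 4 * κ / y = 2 * κ / y + 4 * κ / (2 * y) := by field
    linarith [hf.tailMean_le_add_tailMean_two_mul hy0.le]
  have h_le := le_of_le_comp_two_mul_of_tendsto ha hx h_double h_lim
  rwa [sub_nonpos, le_div_iff₀' (ha.trans_le hx)] at h_le

lemma tendsto_mul_tailMean (hf : IsServiceDensity f)
    (h : Tendsto (fun x => x ^ 2 * tailS f x) atTop (𝓝 0)) :
    Tendsto (fun x => x * tailMean f x) atTop (𝓝 0) := by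
  refine tendsto_order.2 ⟨fun u hu => ?_, fun u hu => ?_⟩
  · filter_upwards [eventually_ge_atTop 0] with x hx
    exact hu.trans_le (mul_nonneg hx (hf.tailMean_nonneg x))
  · obtain ⟨a, ha⟩ := eventually_atTop.1 (h.eventually_le_const (show 0 < u / 5 by positivity))
    filter_upwards [eventually_ge_atTop (max a 1)] with x hx
    have h_le := hf.mul_tailMean_le_of_sq_mul_tailS_le (by positivity)
      (fun y hy => ha y ((le_max_left a 1).trans hy)) hx
    linarith

-- When the tail vanishes far out, `b` must stay inside the support; the intermediate value theorem
-- finds it at a small positive level of `tailMean f`.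
lemma exists_ge_tailMean_pos_forall_mul_tailMean_le (hf : IsServiceDensity f)
    (h : Tendsto (fun x => x * tailMean f x) atTop (𝓝 0)) {κ a : ℝ} (hκ : 0 < κ)
    (ha : 0 < tailMean f a) :
    ∃ b ≥ a, 0 < tailMean f b ∧ ∀ x ≥ b, x * tailMean f x ≤ κ := by
  obtain ⟨X, hX, hX_le⟩ : ∃ X > 0, ∀ x ≥ X, x * tailMean f x ≤ κ := by
    obtain ⟨X, hX⟩ := eventually_atTop.1 (h.eventually_le_const hκ)
    exact ⟨max X 1, by positivity, fun x hx => hX x ((le_max_left X 1).trans hx)⟩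
  obtain ⟨b, hab, hb⟩ : min (κ / X) (tailMean f a) ∈ tailMean f '' Set.Ici a :=
    isPreconnected_Ici.intermediate_value_Ioc Set.self_mem_Ici
      (le_principal_iff.2 (Ici_mem_atTop a)) hf.continuous_tailMean.continuousOn
      (tendsto_tailMean f) ⟨by positivity, min_le_right _ _⟩
  refine ⟨b, hab, by rw [hb]; positivity, fun x hx => ?_⟩
  rcases le_total X x with hXx | hxX
  · exact hX_le x hXx
  · calc x * tailMean f x ≤ X * tailMean f b :=
          mul_le_mul hxX (hf.antitone_tailMean hx) (hf.tailMean_nonneg x) hX.le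
      _ ≤ X * (κ / X) := by rw [hb]; gcongr; exact min_le_left _ _
      _ = κ := mul_div_cancel₀ κ hX.ne'

end Tails

section CappedSecondMoment

lemma cappedSqMean_le (hf : IsServiceDensity f) (hx : 0 ≤ x) :
    cappedSqMean f x ≤ x * tailMean f 0 := by
  have h_small : ∫ t in (0 : ℝ)..x, t ^ 2 * f t ≤ x * (tailMean f 0 - tailMean f x) := by
    rw [hf.tailMean_sub_tailMean, ← intervalIntegral.integral_const_mul]
    refine intervalIntegral.integral_mono_on hx (hf.intervalIntegrable_sq_mul _ _)
      (hf.integrable_id_mul.const_mul _).intervalIntegrable fun t ht => ?_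
    rw [pow_two, mul_assoc]
    exact mul_le_mul_of_nonneg_right ht.2 (hf.id_mul_nonneg t)
  have h_large : x * (x * tailS f x) ≤ x * tailMean f x :=
    mul_le_mul_of_nonneg_left (hf.mul_tailS_le_tailMean x) hx
  rw [cappedSqMean]
  linarith

lemma monotoneOn_cappedSqMean (hf : IsServiceDensity f) :
    MonotoneOn (cappedSqMean f) (Set.Ici 0) := by
  intro a ha b _ hab
  have ha0 : 0 ≤ a := ha
  have h_middle : a ^ 2 * (tailS f a - tailS f b) ≤ ∫ t in a..b, t ^ 2 * f t := by
    rw [hf.tailS_sub_tailS, ← intervalIntegral.integral_const_mul]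
    refine intervalIntegral.integral_mono_on hab (hf.integrable.const_mul _).intervalIntegrable
      (hf.intervalIntegrable_sq_mul _ _) fun t ht => ?_
    exact mul_le_mul_of_nonneg_right (pow_le_pow_left₀ ha0 ht.1 2) (hf.nonneg t)
  have h_large : a ^ 2 * tailS f b ≤ b ^ 2 * tailS f b :=
    mul_le_mul_of_nonneg_right (pow_le_pow_left₀ ha0 hab 2) (hf.tailS_nonneg b)
  have h_split := intervalIntegral.integral_add_adjacent_intervals
    (hf.intervalIntegrable_sq_mul 0 a) (hf.intervalIntegrable_sq_mul a b)
  rw [cappedSqMean, cappedSqMean]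
  linarith

lemma cappedSqMean_nonneg (hf : IsServiceDensity f) (hx : 0 ≤ x) : 0 ≤ cappedSqMean f x :=
  add_nonneg
    (intervalIntegral.integral_nonneg hx fun t _ => mul_nonneg (sq_nonneg t) (hf.nonneg t))
    (mul_nonneg (sq_nonneg x) (hf.tailS_nonneg x))

lemma cappedSqMean_pos (hf : IsServiceDensity f) (hx : 0 < x) (h_tail : 0 < tailS f x) :
    0 < cappedSqMean f x :=
  add_pos_of_nonneg_of_pos
    (intervalIntegral.integral_nonneg hx.le fun t _ => mul_nonneg (sq_nonneg t) (hf.nonneg t))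
    (by positivity)

lemma measurable_cappedSqMean (hf : IsServiceDensity f) : Measurable (cappedSqMean f) :=
  (intervalIntegral.continuous_primitive hf.intervalIntegrable_sq_mul 0).measurable.add
    ((measurable_id.pow_const 2).mul hf.antitone_tailS.measurable)

end CappedSecondMoment

section RelevantLoad

lemma one_sub_rhoLe (hf : IsServiceDensity f) (lam x : ℝ) :
    1 - rhoLe f lam x = (1 - lam * tailMean f 0) + lam * tailMean f x := by
  rw [rhoLe, ← hf.tailMean_sub_tailMean]
  ring

lemma antitone_one_sub_rhoLe (hf : IsServiceDensity f) (hlam : 0 < lam) :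
    Antitone fun x => 1 - rhoLe f lam x := by
  simp only [hf.one_sub_rhoLe]
  exact (hf.antitone_tailMean.const_mul hlam.le).const_add _

lemma continuous_one_sub_rhoLe (hf : IsServiceDensity f) (lam : ℝ) :
    Continuous fun x => 1 - rhoLe f lam x := by
  simp only [hf.one_sub_rhoLe]
  exact continuous_const.add (continuous_const.mul hf.continuous_tailMean)

lemma one_sub_load_le_one_sub_rhoLe (hf : IsServiceDensity f) (hlam : 0 < lam) (x : ℝ) :
    1 - lam * tailMean f 0 ≤ 1 - rhoLe f lam x := by
  rw [hf.one_sub_rhoLe]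
  exact le_add_of_nonneg_right (mul_nonneg hlam.le (hf.tailMean_nonneg x))

lemma one_sub_rhoLe_pos (hf : IsServiceDensity f) (hlam : 0 < lam)
    (hload : lam * tailMean f 0 < 1) (x : ℝ) : 0 < 1 - rhoLe f lam x :=
  (sub_pos.2 hload).trans_le (hf.one_sub_load_le_one_sub_rhoLe hlam x)

lemma tailMean_div_le_one_sub_rhoLe (hf : IsServiceDensity f) (hload : lam * tailMean f 0 < 1)
    (hx : 0 ≤ x) : tailMean f x / tailMean f 0 ≤ 1 - rhoLe f lam x := by
  rw [hf.one_sub_rhoLe, div_le_iff₀ hf.tailMean_zero_pos]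
  have h_le : (1 - lam * tailMean f 0) * tailMean f x ≤ (1 - lam * tailMean f 0) * tailMean f 0 :=
    mul_le_mul_of_nonneg_left (hf.antitone_tailMean hx) (sub_pos.2 hload).le
  linarith

lemma tendsto_one_sub_load (hf : IsServiceDensity f) :
    Tendsto (fun lam => 1 - lam * tailMean f 0) (𝓝[<] (1 / tailMean f 0)) (𝓝[>] 0) := by
  refine tendsto_nhdsWithin_iff.2 ⟨?_, ?_⟩
  · refine (Continuous.tendsto' (by fun_prop) _ _ ?_).mono_left nhdsWithin_le_nhds
    rw [one_div_mul_cancel hf.tailMean_zero_pos.ne', sub_self]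
  · filter_upwards [self_mem_nhdsWithin] with lam hlam
    exact sub_pos.2 ((lt_div_iff₀ hf.tailMean_zero_pos).1 hlam)

lemma eventually_pos_and_load_lt_one (hf : IsServiceDensity f) :
    ∀ᶠ lam in 𝓝[<] (1 / tailMean f 0), 0 < lam ∧ lam * tailMean f 0 < 1 := by
  filter_upwards [nhdsWithin_le_nhds (lt_mem_nhds (one_div_pos.2 hf.tailMean_zero_pos)),
    hf.tendsto_one_sub_load.eventually self_mem_nhdsWithin] with lam hlam hload
  exact ⟨hlam, sub_pos.1 hload⟩

end RelevantLoad

section ResponseTimeComponents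

lemma waitingTime_nonneg (hf : IsServiceDensity f) (hlam : 0 < lam) (hx : 0 ≤ x) :
    0 ≤ waitingTime f lam x :=
  div_nonneg (mul_nonneg hlam.le (hf.cappedSqMean_nonneg hx)) (by positivity)

lemma waitingTime_le (hf : IsServiceDensity f) (hlam : 0 < lam) (hload : lam * tailMean f 0 < 1)
    (hx : 0 ≤ x) :
    waitingTime f lam x ≤ lam * tailMean f 0 / (2 * (1 - lam * tailMean f 0) ^ 2) * x := by
  have h_num_nonneg : 0 ≤ lam * (x * tailMean f 0) :=
    mul_nonneg hlam.le (mul_nonneg hx (hf.tailMean_nonneg 0))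
  calc waitingTime f lam x
      ≤ lam * (x * tailMean f 0) / (2 * (1 - lam * tailMean f 0) ^ 2) := by
        refine div_le_div₀ h_num_nonneg ?_ (mul_pos two_pos (pow_pos (sub_pos.2 hload) 2)) ?_
        · exact mul_le_mul_of_nonneg_left (hf.cappedSqMean_le hx) hlam.le
        · exact mul_le_mul_of_nonneg_left (pow_le_pow_left₀ (sub_pos.2 hload).le
            (hf.one_sub_load_le_one_sub_rhoLe hlam x) 2) two_pos.le
    _ = lam * tailMean f 0 / (2 * (1 - lam * tailMean f 0) ^ 2) * x := by ring

lemma busyPeriod_nonneg (hf : IsServiceDensity f) (hlam : 0 < lam)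
    (hload : lam * tailMean f 0 < 1) (hx : 0 ≤ x) : 0 ≤ busyPeriod f lam x :=
  div_nonneg hx (hf.one_sub_rhoLe_pos hlam hload x).le

lemma busyPeriod_le_inv_mul (hf : IsServiceDensity f) (hlam : 0 < lam)
    (hload : lam * tailMean f 0 < 1) (hx : 0 ≤ x) :
    busyPeriod f lam x ≤ (1 - lam * tailMean f 0)⁻¹ * x := by
  rw [inv_mul_eq_div]
  exact div_le_div_of_nonneg_left hx (sub_pos.2 hload) (hf.one_sub_load_le_one_sub_rhoLe hlam x)

lemma continuous_one_div_one_sub_rhoLe (hf : IsServiceDensity f) (hlam : 0 < lam)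
    (hload : lam * tailMean f 0 < 1) : Continuous fun x => 1 / (1 - rhoLe f lam x) :=
  continuous_const.div (hf.continuous_one_sub_rhoLe lam)
    fun x => (hf.one_sub_rhoLe_pos hlam hload x).ne'

lemma residenceTime_nonneg (hf : IsServiceDensity f) (hlam : 0 < lam)
    (hload : lam * tailMean f 0 < 1) (hx : 0 ≤ x) : 0 ≤ residenceTime f lam x :=
  intervalIntegral.integral_nonneg hx fun t _ =>
    one_div_nonneg.2 (hf.one_sub_rhoLe_pos hlam hload t).le

lemma residenceTime_le_busyPeriod (hf : IsServiceDensity f) (hlam : 0 < lam)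
    (hload : lam * tailMean f 0 < 1) (hx : 0 ≤ x) :
    residenceTime f lam x ≤ busyPeriod f lam x :=
  calc residenceTime f lam x ≤ ∫ _ in (0 : ℝ)..x, 1 / (1 - rhoLe f lam x) :=
        intervalIntegral.integral_mono_on hx
          ((hf.continuous_one_div_one_sub_rhoLe hlam hload).intervalIntegrable _ _)
          intervalIntegrable_const fun _ ht =>
            one_div_le_one_div_of_le (hf.one_sub_rhoLe_pos hlam hload x)
              (hf.antitone_one_sub_rhoLe hlam ht.2)
    _ = busyPeriod f lam x := by
      rw [intervalIntegral.integral_const, sub_zero, smul_eq_mul, mul_one_div, busyPeriod]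

end ResponseTimeComponents

section Means

lemma integrableOn_mul_of_le (hf : IsServiceDensity f) {g : ℝ → ℝ} {K : ℝ} (hg : Measurable g)
    (hg_nonneg : ∀ x, 0 ≤ x → 0 ≤ g x) (hg_le : ∀ x, 0 ≤ x → g x ≤ K * x) :
    IntegrableOn (fun x => g x * f x) (Set.Ioi 0) := by
  refine (hf.integrableOn_id_mul.const_mul K).mono'
    (hg.mul hf.measurable).aestronglyMeasurable ?_
  filter_upwards [ae_restrict_mem measurableSet_Ioi] with x hx
  have hx0 : 0 ≤ x := le_of_lt hx
  rw [Real.norm_of_nonneg (mul_nonneg (hg_nonneg x hx0) (hf.nonneg x)), ← mul_assoc]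
  exact mul_le_mul_of_nonneg_right (hg_le x hx0) (hf.nonneg x)

lemma integrableOn_waitingTime_mul (hf : IsServiceDensity f) (hlam : 0 < lam)
    (hload : lam * tailMean f 0 < 1) :
    IntegrableOn (fun x => waitingTime f lam x * f x) (Set.Ioi 0) :=
  hf.integrableOn_mul_of_le
    ((hf.measurable_cappedSqMean.const_mul lam).div
      (((hf.continuous_one_sub_rhoLe lam).measurable.pow_const 2).const_mul 2))
    (fun _ hx => hf.waitingTime_nonneg hlam hx) fun _ hx => hf.waitingTime_le hlam hload hx

lemma integrableOn_busyPeriod_mul (hf : IsServiceDensity f) (hlam : 0 < lam)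
    (hload : lam * tailMean f 0 < 1) :
    IntegrableOn (fun x => busyPeriod f lam x * f x) (Set.Ioi 0) :=
  hf.integrableOn_mul_of_le (measurable_id.div (hf.continuous_one_sub_rhoLe lam).measurable)
    (fun _ hx => hf.busyPeriod_nonneg hlam hload hx)
    fun _ hx => hf.busyPeriod_le_inv_mul hlam hload hx

lemma integrableOn_residenceTime_mul (hf : IsServiceDensity f) (hlam : 0 < lam)
    (hload : lam * tailMean f 0 < 1) :
    IntegrableOn (fun x => residenceTime f lam x * f x) (Set.Ioi 0) :=
  hf.integrableOn_mul_of_le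
    (intervalIntegral.continuous_primitive
      (hf.continuous_one_div_one_sub_rhoLe hlam hload).intervalIntegrable 0).measurable
    (fun _ hx => hf.residenceTime_nonneg hlam hload hx)
    fun _ hx => (hf.residenceTime_le_busyPeriod hlam hload hx).trans
      (hf.busyPeriod_le_inv_mul hlam hload hx)

lemma sizeMean_residenceTime_nonneg (hf : IsServiceDensity f) (hlam : 0 < lam)
    (hload : lam * tailMean f 0 < 1) : 0 ≤ sizeMean f (residenceTime f lam) :=
  setIntegral_nonneg measurableSet_Ioi fun x hx =>
    mul_nonneg (hf.residenceTime_nonneg hlam hload (le_of_lt hx)) (hf.nonneg x)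

lemma sizeMean_residenceTime_le (hf : IsServiceDensity f) (hlam : 0 < lam)
    (hload : lam * tailMean f 0 < 1) :
    sizeMean f (residenceTime f lam) ≤ sizeMean f (busyPeriod f lam) :=
  setIntegral_mono_on (hf.integrableOn_residenceTime_mul hlam hload)
    (hf.integrableOn_busyPeriod_mul hlam hload) measurableSet_Ioi fun x hx =>
      mul_le_mul_of_nonneg_right (hf.residenceTime_le_busyPeriod hlam hload (le_of_lt hx))
        (hf.nonneg x)

lemma TsrptMean_eq_sizeMean_add (hf : IsServiceDensity f) (hlam : 0 < lam)
    (hload : lam * tailMean f 0 < 1) :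
    TsrptMean f lam = sizeMean f (waitingTime f lam) + sizeMean f (residenceTime f lam) := by
  simp only [TsrptMean, sizeMean, Tsrpt1_eq_waitingTime_add_residenceTime, add_mul]
  exact integral_add (hf.integrableOn_waitingTime_mul hlam hload)
    (hf.integrableOn_residenceTime_mul hlam hload)

lemma integral_Hbound_eq_sizeMean_add (hf : IsServiceDensity f) (k : ℕ) (hlam : 0 < lam)
    (hload : lam * tailMean f 0 < 1) :
    ∫ x in Set.Ioi (0 : ℝ), Hbound f k lam x * f x =
      sizeMean f (waitingTime f lam) + 2 * k * sizeMean f (busyPeriod f lam) := by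
  simp only [sizeMean, Hbound_eq_waitingTime_add_busyPeriod, add_mul, ← integral_const_mul,
    mul_assoc (2 * (k : ℝ))]
  exact integral_add (hf.integrableOn_waitingTime_mul hlam hload)
    ((hf.integrableOn_busyPeriod_mul hlam hload).const_mul _)

end Means

section BusyPeriodDiverges

lemma integral_busyPeriod_mul_eq_log (hf : IsServiceDensity f) (hlam : 0 < lam)
    (hload : lam * tailMean f 0 < 1) (x : ℝ) :
    ∫ t in (0 : ℝ)..x, busyPeriod f lam t * f t = -Real.log (1 - rhoLe f lam x) / lam := by
  have h_rho (y : ℝ) : rhoLe f lam y = ∫ t in (0 : ℝ)..y, lam * (t * f t) :=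
    (intervalIntegral.integral_const_mul _ _).symm
  have h_log := integral_div_const_sub_primitive (g := fun t => lam * (t * f t)) (c := 1)
    (hf.integrable_id_mul.const_mul lam).intervalIntegrable
    (fun y _ => h_rho y ▸ hf.one_sub_rhoLe_pos hlam hload y) (b := x)
  simp only [← h_rho, Real.log_one, zero_sub] at h_log
  rw [← h_log, eq_div_iff hlam.ne', ← intervalIntegral.integral_mul_const]
  congr 1 with t
  rw [busyPeriod]
  ring

lemma sizeMean_busyPeriod_eq_log (hf : IsServiceDensity f) (hlam : 0 < lam)
    (hload : lam * tailMean f 0 < 1) :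
    sizeMean f (busyPeriod f lam) = -Real.log (1 - lam * tailMean f 0) / lam := by
  have h_rho : Tendsto (fun x => 1 - rhoLe f lam x) atTop (𝓝 (1 - lam * tailMean f 0)) := by
    simpa [hf.one_sub_rhoLe] using ((tendsto_tailMean f).const_mul lam).const_add
      (1 - lam * tailMean f 0)
  have h_log := ((h_rho.log (sub_pos.2 hload).ne').neg).div_const lam
  refine tendsto_nhds_unique (intervalIntegral_tendsto_integral_Ioi 0
    (hf.integrableOn_busyPeriod_mul hlam hload) tendsto_id) (h_log.congr fun x => ?_)
  exact (hf.integral_busyPeriod_mul_eq_log hlam hload x).symm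

lemma tendsto_sizeMean_busyPeriod (hf : IsServiceDensity f) :
    Tendsto (fun lam => sizeMean f (busyPeriod f lam)) (𝓝[<] (1 / tailMean f 0)) atTop := by
  have h_log : Tendsto (fun lam => -Real.log (1 - lam * tailMean f 0))
      (𝓝[<] (1 / tailMean f 0)) atTop :=
    tendsto_neg_atBot_atTop.comp (Real.tendsto_log_nhdsGT_zero.comp hf.tendsto_one_sub_load)
  have h_inv : Tendsto (fun lam : ℝ => lam⁻¹) (𝓝[<] (1 / tailMean f 0)) (𝓝 (tailMean f 0)) := by
    simpa using (tendsto_inv₀ (one_div_pos.2 hf.tailMean_zero_pos).ne').mono_left nhdsWithin_le_nhds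
  refine (h_log.atTop_mul_pos hf.tailMean_zero_pos h_inv).congr' ?_
  filter_upwards [hf.eventually_pos_and_load_lt_one] with lam ⟨hlam, hload⟩
  rw [hf.sizeMean_busyPeriod_eq_log hlam hload, div_eq_mul_inv]

end BusyPeriodDiverges

section BusyPeriodNegligible

lemma busyPeriod_le_mul_of_tailMean_pos (hf : IsServiceDensity f)
    (hload : lam * tailMean f 0 < 1) {b : ℝ} (hb : 0 < tailMean f b) (hx : 0 ≤ x) (hxb : x ≤ b) :
    busyPeriod f lam x ≤ tailMean f 0 / tailMean f b * x := by
  have h_ge : tailMean f b / tailMean f 0 ≤ 1 - rhoLe f lam x :=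
    (div_le_div_of_nonneg_right (hf.antitone_tailMean hxb) (hf.tailMean_nonneg 0)).trans
      (hf.tailMean_div_le_one_sub_rhoLe hload hx)
  calc busyPeriod f lam x ≤ x / (tailMean f b / tailMean f 0) :=
        div_le_div_of_nonneg_left hx (div_pos hb hf.tailMean_zero_pos) h_ge
    _ = tailMean f 0 / tailMean f b * x := by rw [div_div_eq_mul_div, mul_comm, mul_div_right_comm]

lemma busyPeriod_le_mul_waitingTime (hf : IsServiceDensity f) (hlam : 0 < lam)
    (hload : lam * tailMean f 0 < 1) {η : ℝ}
    (h : 2 * (x * (1 - rhoLe f lam x)) ≤ η * (lam * cappedSqMean f x)) :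
    busyPeriod f lam x ≤ η * waitingTime f lam x := by
  have h_pos := hf.one_sub_rhoLe_pos hlam hload x
  calc busyPeriod f lam x
      = 2 * (x * (1 - rhoLe f lam x)) / (2 * (1 - rhoLe f lam x) ^ 2) := by
        rw [busyPeriod]
        field
    _ ≤ η * (lam * cappedSqMean f x) / (2 * (1 - rhoLe f lam x) ^ 2) := by gcongr
    _ = η * waitingTime f lam x := mul_div_assoc _ _ _

-- For `b ≤ x ≤ κ / (1 - ρ)`, both terms of
-- `x * (1 - rhoLe f lam x) = x * (1 - ρ) + lam * (x * tailMean f x)` are at most `κ`.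
lemma busyPeriod_le_mul_add_mul_waitingTime (hf : IsServiceDensity f) (hlam : 0 < lam)
    (hload : lam * tailMean f 0 < 1) (hload_half : 1 / 2 ≤ lam * tailMean f 0) {η κ a b : ℝ}
    (hη : 0 < η) (ha : 0 < a) (hab : a ≤ b) (hb : 0 < tailMean f b)
    (hκ : 8 * (κ * tailMean f 0) = η * cappedSqMean f a)
    (h_tail : ∀ y ≥ b, y * tailMean f y ≤ κ * tailMean f 0) (hx : 0 < x)
    (hxκ : x * (1 - lam * tailMean f 0) ≤ κ) :
    busyPeriod f lam x ≤ tailMean f 0 / tailMean f b * x + η * waitingTime f lam x := by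
  have hw := mul_nonneg hη.le (hf.waitingTime_nonneg hlam hx.le)
  have hx_mul : 0 ≤ tailMean f 0 / tailMean f b * x :=
    mul_nonneg (div_nonneg (hf.tailMean_nonneg 0) hb.le) hx.le
  rcases le_total x b with hxb | hbx
  · exact (hf.busyPeriod_le_mul_of_tailMean_pos hload hb hx.le hxb).trans
      (le_add_of_nonneg_right hw)
  · refine (hf.busyPeriod_le_mul_waitingTime hlam hload ?_).trans (le_add_of_nonneg_left hx_mul)
    have hκ_nonneg : 0 ≤ κ := (mul_nonneg hx.le (sub_pos.2 hload).le).trans hxκ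
    have h_moment : cappedSqMean f a ≤ cappedSqMean f x :=
      hf.monotoneOn_cappedSqMean ha.le hx.le (hab.trans hbx)
    calc 2 * (x * (1 - rhoLe f lam x))
        = 2 * (x * (1 - lam * tailMean f 0)) + 2 * (lam * (x * tailMean f x)) := by
          rw [hf.one_sub_rhoLe]
          ring
      _ ≤ 2 * κ + 2 * (lam * (κ * tailMean f 0)) := by
          linarith [mul_le_mul_of_nonneg_left (h_tail x hbx) hlam.le]
      _ ≤ lam * (8 * (κ * tailMean f 0)) := by
          linarith [mul_le_mul_of_nonneg_left hload_half hκ_nonneg]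
      _ = η * (lam * cappedSqMean f a) := by rw [hκ, mul_left_comm]
      _ ≤ η * (lam * cappedSqMean f x) := by gcongr

lemma setIntegral_Ioc_busyPeriod_mul_le (hf : IsServiceDensity f) (hlam : 0 < lam)
    (hload : lam * tailMean f 0 < 1) {A η c : ℝ} (hA : 0 ≤ A) (hη : 0 ≤ η)
    (h : ∀ x ∈ Set.Ioc 0 c, busyPeriod f lam x ≤ A * x + η * waitingTime f lam x) :
    ∫ x in Set.Ioc 0 c, busyPeriod f lam x * f x ≤
      A * tailMean f 0 + η * sizeMean f (waitingTime f lam) := by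
  have h_linear := hf.integrableOn_id_mul.const_mul A
  have h_wait := (hf.integrableOn_waitingTime_mul hlam hload).const_mul η
  have h_sum : IntegrableOn (fun x => A * (x * f x) + η * (waitingTime f lam x * f x))
      (Set.Ioi 0) := h_linear.add h_wait
  calc ∫ x in Set.Ioc 0 c, busyPeriod f lam x * f x
      ≤ ∫ x in Set.Ioc 0 c, (A * (x * f x) + η * (waitingTime f lam x * f x)) := by
        refine setIntegral_mono_on
          ((hf.integrableOn_busyPeriod_mul hlam hload).mono_set Set.Ioc_subset_Ioi_self)
          (h_sum.mono_set Set.Ioc_subset_Ioi_self) measurableSet_Ioc fun x hx => ?_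
        linarith [mul_le_mul_of_nonneg_right (h x hx) (hf.nonneg x)]
    _ ≤ ∫ x in Set.Ioi 0, (A * (x * f x) + η * (waitingTime f lam x * f x)) := by
        refine setIntegral_mono_set h_sum ?_ Set.Ioc_subset_Ioi_self.eventuallyLE
        filter_upwards [ae_restrict_mem measurableSet_Ioi] with x hx
        have hw := hf.waitingTime_nonneg hlam (le_of_lt hx)
        have hfx := hf.nonneg x
        have hxf := hf.id_mul_nonneg x
        positivity
    _ = A * tailMean f 0 + η * sizeMean f (waitingTime f lam) := by
        rw [integral_add h_linear h_wait, integral_const_mul, integral_const_mul, tailMean,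
          sizeMean]

lemma setIntegral_Ioi_busyPeriod_mul_le (hf : IsServiceDensity f) (hlam : 0 < lam)
    (hload : lam * tailMean f 0 < 1) {c : ℝ} (hc : 0 ≤ c) :
    ∫ x in Set.Ioi c, busyPeriod f lam x * f x ≤
      (1 - lam * tailMean f 0)⁻¹ * tailMean f c := by
  rw [tailMean.eq_def f c, ← integral_const_mul]
  refine setIntegral_mono_on
    ((hf.integrableOn_busyPeriod_mul hlam hload).mono_set (Set.Ioi_subset_Ioi hc))
    (hf.integrable_id_mul.const_mul _).integrableOn measurableSet_Ioi fun x hx => ?_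
  rw [← mul_assoc]
  exact mul_le_mul_of_nonneg_right
    (hf.busyPeriod_le_inv_mul hlam hload (hc.trans (le_of_lt hx))) (hf.nonneg x)

lemma sizeMean_busyPeriod_eq_add (hf : IsServiceDensity f) (hlam : 0 < lam)
    (hload : lam * tailMean f 0 < 1) {c : ℝ} (hc : 0 ≤ c) :
    sizeMean f (busyPeriod f lam) = (∫ x in Set.Ioc 0 c, busyPeriod f lam x * f x) +
      ∫ x in Set.Ioi c, busyPeriod f lam x * f x := by
  have h_int := hf.integrableOn_busyPeriod_mul hlam hload
  rw [sizeMean, ← Set.Ioc_union_Ioi_eq_Ioi hc]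
  exact setIntegral_union (Set.Ioc_disjoint_Ioi le_rfl) measurableSet_Ioi
    (h_int.mono_set Set.Ioc_subset_Ioi_self) (h_int.mono_set (Set.Ioi_subset_Ioi hc))

-- Jobs larger than `κ / (1 - ρ)` contribute at most `E[S]`, as `x * tailMean f x ≤ κ * E[S]` there.
lemma sizeMean_busyPeriod_le (hf : IsServiceDensity f) (hlam : 0 < lam)
    (hload : lam * tailMean f 0 < 1) (hload_half : 1 / 2 ≤ lam * tailMean f 0) {η κ a b : ℝ}
    (hη : 0 < η) (ha : 0 < a) (hab : a ≤ b) (hb : 0 < tailMean f b)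
    (hκ : 8 * (κ * tailMean f 0) = η * cappedSqMean f a)
    (h_tail : ∀ y ≥ b, y * tailMean f y ≤ κ * tailMean f 0)
    (hbκ : b * (1 - lam * tailMean f 0) ≤ κ) :
    sizeMean f (busyPeriod f lam) ≤ η * sizeMean f (waitingTime f lam) +
      (tailMean f 0 / tailMean f b * tailMean f 0 + tailMean f 0) := by
  have hδ : 0 < 1 - lam * tailMean f 0 := sub_pos.2 hload
  have hκ_pos : 0 < κ := (mul_pos (ha.trans_le hab) hδ).trans_le hbκ
  have hc : 0 ≤ κ / (1 - lam * tailMean f 0) := (div_pos hκ_pos hδ).le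
  have h_large : (1 - lam * tailMean f 0)⁻¹ * tailMean f (κ / (1 - lam * tailMean f 0)) ≤
      tailMean f 0 := by
    have h_le := h_tail (κ / (1 - lam * tailMean f 0)) ((le_div_iff₀ hδ).2 hbκ)
    rw [div_mul_eq_mul_div, mul_div_assoc] at h_le
    rw [inv_mul_eq_div]
    exact le_of_mul_le_mul_left h_le hκ_pos
  have h_small := hf.setIntegral_Ioc_busyPeriod_mul_le hlam hload
    (div_nonneg (hf.tailMean_nonneg 0) hb.le) hη.le fun x hx =>
      hf.busyPeriod_le_mul_add_mul_waitingTime hlam hload hload_half hη ha hab hb hκ h_tail hx.1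
        ((le_div_iff₀ hδ).1 hx.2)
  rw [hf.sizeMean_busyPeriod_eq_add hlam hload hc]
  linarith [hf.setIntegral_Ioi_busyPeriod_mul_le hlam hload hc]

lemma exists_eventually_sizeMean_busyPeriod_le (hf : IsServiceDensity f)
    (h : Tendsto (fun x => x * tailMean f x) atTop (𝓝 0)) {η : ℝ} (hη : 0 < η) :
    ∃ K, ∀ᶠ lam in 𝓝[<] (1 / tailMean f 0),
      sizeMean f (busyPeriod f lam) ≤ η * sizeMean f (waitingTime f lam) + K := by
  have hm := hf.tailMean_zero_pos
  obtain ⟨a, ha, ha_tail⟩ := hf.exists_pos_tailS_pos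
  have ha_mean : 0 < tailMean f a := (mul_pos ha ha_tail).trans_le (hf.mul_tailS_le_tailMean a)
  obtain ⟨κ, hκ, hκ_eq⟩ : ∃ κ > 0, 8 * (κ * tailMean f 0) = η * cappedSqMean f a :=
    have hv := hf.cappedSqMean_pos ha ha_tail
    ⟨η * cappedSqMean f a / (8 * tailMean f 0), by positivity, by field⟩
  obtain ⟨b, hab, hb, h_tail⟩ :=
    hf.exists_ge_tailMean_pos_forall_mul_tailMean_le h (mul_pos hκ hm) ha_mean
  have hδ := tendsto_nhds_of_tendsto_nhdsWithin hf.tendsto_one_sub_load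
  refine ⟨tailMean f 0 / tailMean f b * tailMean f 0 + tailMean f 0, ?_⟩
  filter_upwards [hf.eventually_pos_and_load_lt_one, hδ.eventually_le_const one_half_pos,
    hδ.eventually_le_const (div_pos hκ (ha.trans_le hab))] with lam ⟨hlam, hload⟩ h_half h_small
  exact hf.sizeMean_busyPeriod_le hlam hload (by linarith) hη ha hab hb hκ_eq h_tail
    ((le_div_iff₀' (ha.trans_le hab)).1 h_small)

lemma sizeMean_busyPeriod_isLittleO (hf : IsServiceDensity f)
    (h : Tendsto (fun x => x * tailMean f x) atTop (𝓝 0)) :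
    (fun lam => sizeMean f (busyPeriod f lam)) =o[𝓝[<] (1 / tailMean f 0)]
      fun lam => sizeMean f (waitingTime f lam) :=
  isLittleO_of_tendsto_atTop_of_le_mul_add hf.tendsto_sizeMean_busyPeriod fun _ hη =>
    hf.exists_eventually_sizeMean_busyPeriod_le h hη

lemma sizeMean_residenceTime_isLittleO (hf : IsServiceDensity f)
    (h : Tendsto (fun x => x * tailMean f x) atTop (𝓝 0)) :
    (fun lam => sizeMean f (residenceTime f lam)) =o[𝓝[<] (1 / tailMean f 0)]
      fun lam => sizeMean f (waitingTime f lam) := by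
  refine (Asymptotics.IsBigO.of_bound' ?_).trans_isLittleO (hf.sizeMean_busyPeriod_isLittleO h)
  filter_upwards [hf.eventually_pos_and_load_lt_one] with lam ⟨hlam, hload⟩
  rw [Real.norm_of_nonneg (hf.sizeMean_residenceTime_nonneg hlam hload)]
  exact (hf.sizeMean_residenceTime_le hlam hload).trans (le_abs_self _)

lemma eventually_sizeMean_waitingTime_ne_zero (hf : IsServiceDensity f)
    (h : Tendsto (fun x => x * tailMean f x) atTop (𝓝 0)) :
    ∀ᶠ lam in 𝓝[<] (1 / tailMean f 0), sizeMean f (waitingTime f lam) ≠ 0 := by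
  filter_upwards [(hf.sizeMean_busyPeriod_isLittleO h).isBigO.eq_zero_imp,
    hf.tendsto_sizeMean_busyPeriod.eventually_ne_atTop 0] with lam h_imp h_ne
  exact mt h_imp h_ne

end BusyPeriodNegligible

end IsServiceDensity

theorem Hbound_ratio_tendsto_one_unbounded_general {f : ℝ → ℝ} {m : ℝ} (hf : IsServiceDensity f)
    (hm : m = ∫ t in Set.Ioi (0 : ℝ), t * f t) (k : ℕ)
    (htail : Tendsto (fun x => x ^ 2 * tailS f x) atTop (𝓝 0)) :
    Tendsto (fun lam => (∫ x in Set.Ioi (0 : ℝ), Hbound f k lam x * f x) / TsrptMean f lam)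
      (𝓝[<] (1 / m)) (𝓝 1) := by
  obtain rfl : m = tailMean f 0 := hm
  have h_mean := hf.tendsto_mul_tailMean htail
  refine (tendsto_add_div_add_one_of_isLittleO (hf.eventually_sizeMean_waitingTime_ne_zero h_mean)
    ((hf.sizeMean_busyPeriod_isLittleO h_mean).const_mul_left (2 * k))
    (hf.sizeMean_residenceTime_isLittleO h_mean)).congr' ?_
  filter_upwards [hf.eventually_pos_and_load_lt_one] with lam ⟨hlam, hload⟩
  rw [hf.integral_Hbound_eq_sizeMean_add k hlam hload, hf.TsrptMean_eq_sizeMean_add hlam hload]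

/-- **Lemma 6.4, unbounded case.** If `S` is unbounded with tail of upper
Matuszewska index less than `−2` (Potter-type bound), then
`lim_{λ → (1/m)⁻} (∫₀^∞ H_λ(x) f(x) dx) / T̄(λ) = 1`. -/
theorem Hbound_ratio_tendsto_one_unbounded
    (f : ℝ → ℝ) (m : ℝ)
    (hf_meas : Measurable f)
    (hf_nonneg : ∀ x, 0 ≤ f x)
    (hf_zero : ∀ x ≤ 0, f x = 0)
    (hf_prob : ∫ t in Set.Ioi (0:ℝ), f t = 1)
    (hm_int : Integrable (fun t => t * f t) (volume.restrict (Set.Ioi 0)))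
    (hm_def : m = ∫ t in Set.Ioi (0:ℝ), t * f t)
    (hm_pos : 0 < m)
    (k : ℕ) (hk : 1 ≤ k)
    (hunbounded : ∀ x > (0:ℝ), 0 < tailS f x)
    (hmatuszewska : ∃ C > (0:ℝ), ∃ ε > (0:ℝ), ∃ x₀ > (0:ℝ),
      ∀ x ≥ x₀, ∀ γ ≥ (1:ℝ), tailS f (γ * x) ≤ C * γ ^ (-(2 + ε)) * tailS f x) :
    Tendsto (fun lam => (∫ x in Set.Ioi (0:ℝ), Hbound f k lam x * f x) / TsrptMean f lam)
      (nhdsWithin (1/m) (Set.Iio (1/m))) (nhds 1) := by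
  obtain ⟨C, -, ε, hε, x₀, hx₀, h_potter⟩ := hmatuszewska
  have hf : IsServiceDensity f := ⟨hf_meas, hf_nonneg, hf_zero, hf_prob, hm_int⟩
  exact Hbound_ratio_tendsto_one_unbounded_general hf hm_def k
    (tendsto_sq_mul_atTop_zero_of_le_rpow hf.tailS_nonneg hε hx₀ fun γ hγ =>
      (h_potter x₀ le_rfl γ hγ).trans_eq (mul_right_comm _ _ _))
end

section
/- (Theorem 6.12 in explicit form.) Fix an integer k ≥ 1. If S is unbounded (F̄(x) > 0 for all x > 0) and the tail of S has upper Matuszewska index less than −2, expressed via the equivalent Potter-type bound — there exist constants C > 0, ε > 0 and x₀ > 0 such that F̄(γx) ≤ C·γ^{−(2+ε)}·F̄(x) for all x ≥ x₀ and all γ ≥ 1 — then the paper's explicit upper bound on the k-server FB mean response time is asymptotically tight against the single-server FB mean response time in heavy traffic: lim_{λ → (1/m)⁻} (∫₀^∞ (W̄_λ(x) + (2k−1)·R̄_λ(x))·f(x) dx) / T̄^FB(λ) = 1. -/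
open MeasureTheory Filter

/-- Truncated relevant load for FB, `ρ_{x̄} = λ ∫₀^∞ min(t,x) f(t) dt`. -/
noncomputable def rhoBar (f : ℝ → ℝ) (lam x : ℝ) : ℝ :=
  lam * ∫ t in Set.Ioi (0:ℝ), min t x * f t

/-- Waiting-type component of the FB-1 mean response time of a size-`x` job,
`W̄_λ(x) = λ (∫₀^∞ min(t,x)² f(t) dt) / (2(1−ρ_{x̄})²)`. -/
noncomputable def WbarFB (f : ℝ → ℝ) (lam x : ℝ) : ℝ :=
  lam * (∫ t in Set.Ioi (0:ℝ), (min t x) ^ 2 * f t) / (2 * (1 - rhoBar f lam x) ^ 2)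

/-- Residence-type component of the FB-1 mean response time of a size-`x` job,
`R̄_λ(x) = x/(1−ρ_{x̄})`. -/
noncomputable def RbarFB (f : ℝ → ℝ) (lam x : ℝ) : ℝ :=
  x / (1 - rhoBar f lam x)

/-- Overall FB-1 mean response time, `T̄^FB(λ) = ∫₀^∞ (W̄_λ(x)+R̄_λ(x)) f(x) dx`. -/
noncomputable def TfbMean (f : ℝ → ℝ) (lam : ℝ) : ℝ :=
  ∫ x in Set.Ioi (0:ℝ), (WbarFB f lam x + RbarFB f lam x) * f x

/-! The Potter bound makes `E S²` finite. Write `W`, `R` for the two components of the response time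
and `G x = E (S - x)⁺`. Pointwise `R² ≤ K (1 + x²) W`, so Cauchy–Schwarz gives `(E R)² ≤ L E W` with
`L` bounded in heavy traffic, and it suffices that `E W → ∞`. As `W` is monotone,
`E W ≥ P (S > x) W x` for every `x`, and since `1 - ρ_x → G x / m` in the limit, this lower bound is
of order `P (S > x) / (G x)²`. A second use of Cauchy–Schwarz, `(G x)² ≤ P (S > x) E ((S - x)⁺)²`,
shows that the bound is arbitrarily large, because `E ((S - x)⁺)²` takes arbitrarily small positive
values: it is continuous in `x` and tends to `0`. -/

open scoped Topology

section Integral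

variable {α : Type*} [MeasurableSpace α] {ν : Measure α}

theorem sq_integral_le_integral_mul_integral {u v w : α → ℝ} (hu : Integrable u ν)
    (hv : Integrable v ν) (hw : Integrable w ν) (hv_nonneg : 0 ≤ᵐ[ν] v) (hw_nonneg : 0 ≤ᵐ[ν] w)
    (h : ∀ᵐ a ∂ν, u a ^ 2 ≤ v a * w a) :
    (∫ a, u a ∂ν) ^ 2 ≤ (∫ a, v a ∂ν) * ∫ a, w a ∂ν := by
  have am_gm (s : ℝ) : ∀ᵐ a ∂ν, 0 ≤ s * s * v a + s * (2 * u a) + w a := by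
    filter_upwards [hv_nonneg, hw_nonneg, h] with a hva hwa ha
    have hva : 0 ≤ v a := hva
    have hwa : 0 ≤ w a := hwa
    have abs_le : |s * (2 * u a)| ≤ s * s * v a + w a := by
      apply abs_le_of_sq_le_sq _ (add_nonneg (mul_nonneg (mul_self_nonneg s) hva) hwa)
      nlinarith [mul_le_mul_of_nonneg_left ha (sq_nonneg s), sq_nonneg (s * s * v a - w a)]
    linarith [neg_le_of_abs_le abs_le]
  have quadratic_nonneg (s : ℝ) :
      0 ≤ (∫ a, v a ∂ν) * (s * s) + 2 * (∫ a, u a ∂ν) * s + ∫ a, w a ∂ν := by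
    have hvu : Integrable (fun a => s * s * v a + s * (2 * u a)) ν :=
      (hv.const_mul _).add ((hu.const_mul 2).const_mul s)
    have := integral_nonneg_of_ae (am_gm s)
    rw [integral_add hvu hw,
      integral_add (hv.const_mul _) ((hu.const_mul 2).const_mul s)] at this
    simp only [integral_const_mul] at this
    linarith
  have := discrim_le_zero quadratic_nonneg
  rw [discrim] at this
  linarith

theorem integrableOn_measureReal_lt_mul_rpow [IsFiniteMeasure ν] {X : α → ℝ} {p q K x₀ : ℝ}
    (hq : 0 < q) (hqp : q < p) (hx₀ : 0 < x₀)
    (htail : ∀ t ≥ x₀, ν.real {a | t < X a} ≤ K * t ^ (-p)) :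
    IntegrableOn (fun t => ν.real {a | t < X a} * t ^ (q - 1)) (Set.Ioi 0) := by
  have tail_antitone : Antitone fun t => ν.real {a | t < X a} := fun s t hst =>
    measureReal_mono fun a (ha : t < X a) => hst.trans_lt ha
  have tail_meas : Measurable fun t => ν.real {a | t < X a} * t ^ (q - 1) :=
    tail_antitone.measurable.mul (by fun_prop)
  have norm_eq {t : ℝ} (ht : 0 < t) :
      ‖ν.real {a | t < X a} * t ^ (q - 1)‖ = ν.real {a | t < X a} * t ^ (q - 1) :=
    Real.norm_of_nonneg (by positivity)
  rw [← Set.Ioc_union_Ioi_eq_Ioi hx₀.le]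
  refine .union ?near_zero ?at_top
  case near_zero =>
    have rpow_int : IntegrableOn (fun t : ℝ => t ^ (q - 1)) (Set.Ioc 0 x₀) :=
      (intervalIntegral.intervalIntegrable_rpow' (by linarith)).1
    refine (rpow_int.const_mul (ν.real Set.univ)).mono' tail_meas.aestronglyMeasurable ?_
    filter_upwards [ae_restrict_mem measurableSet_Ioc] with t ⟨ht, _⟩
    rw [norm_eq ht]
    exact mul_le_mul_of_nonneg_right (measureReal_mono (Set.subset_univ _)) (by positivity)
  case at_top =>
    have rpow_int : IntegrableOn (fun t : ℝ => t ^ (-p + (q - 1))) (Set.Ioi x₀) :=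
      integrableOn_Ioi_rpow_of_lt (by linarith) hx₀
    refine (rpow_int.const_mul K).mono' tail_meas.aestronglyMeasurable ?_
    filter_upwards [ae_restrict_mem measurableSet_Ioi] with t ht
    have ht_pos : 0 < t := hx₀.trans ht
    rw [norm_eq ht_pos, Real.rpow_add ht_pos, ← mul_assoc]
    gcongr
    exact htail t (le_of_lt ht)

theorem integrable_rpow_of_measureReal_lt_le_rpow [IsFiniteMeasure ν] {X : α → ℝ}
    (hX : AEMeasurable X ν) (hX_nonneg : 0 ≤ᵐ[ν] X) {p q K x₀ : ℝ} (hq : 0 < q) (hqp : q < p)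
    (hx₀ : 0 < x₀) (htail : ∀ t ≥ x₀, ν.real {a | t < X a} ≤ K * t ^ (-p)) :
    Integrable (fun a => X a ^ q) ν := by
  refine ⟨(hX.pow_const q).aestronglyMeasurable, ?_⟩
  rw [hasFiniteIntegral_iff_ofReal (hX_nonneg.mono fun a ha => Real.rpow_nonneg ha q),
    lintegral_rpow_eq_lintegral_meas_lt_mul ν hX_nonneg hX hq]
  refine ENNReal.mul_lt_top ENNReal.ofReal_lt_top ?_
  have tail_lintegral_lt_top :=
    (integrableOn_measureReal_lt_mul_rpow hq hqp hx₀ htail).lintegral_lt_top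
  simpa only [ENNReal.ofReal_mul measureReal_nonneg, ofReal_measureReal (measure_ne_top ν _)]
    using tail_lintegral_lt_top

end Integral

/-- The truncated load `λ E[min(S, x)]` of a service requirement `S` with law `μ`; the law may have
atoms. -/
noncomputable def fbLoad (μ : Measure ℝ) (lam x : ℝ) : ℝ :=
  lam * ∫ t, min t x ∂μ

/-- The waiting component of the FB mean response time of a size-`x` job when the service
requirement has law `μ`. -/
noncomputable def fbWaiting (μ : Measure ℝ) (lam x : ℝ) : ℝ :=
  lam * (∫ t, min t x ^ 2 ∂μ) / (2 * (1 - fbLoad μ lam x) ^ 2)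

/-- The residence component of the FB mean response time of a size-`x` job when the service
requirement has law `μ`. -/
noncomputable def fbResidence (μ : Measure ℝ) (lam x : ℝ) : ℝ :=
  x / (1 - fbLoad μ lam x)

section TruncatedMoments

variable {μ : Measure ℝ}

theorem exists_integral_max_sub_sq_eq (hμ_nonneg : ∀ᵐ t ∂μ, 0 ≤ t)
    (hμ : MemLp id 2 μ) {δ : ℝ} (hδ : δ ∈ Set.Ioc 0 (∫ t, t ^ 2 ∂μ)) :
    ∃ x ≥ 0, ∫ t, max (t - x) 0 ^ 2 ∂μ = δ := by
  have dominated : ∀ x ≥ 0, ∀ᵐ t ∂μ, ‖max (t - x) 0 ^ 2‖ ≤ t ^ 2 := fun x hx => by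
    filter_upwards [hμ_nonneg] with t ht
    rw [Real.norm_of_nonneg (sq_nonneg _)]
    exact pow_le_pow_left₀ (le_max_right _ _) (max_le (by linarith) ht) 2
  have meas (x : ℝ) : AEStronglyMeasurable (fun t => max (t - x) 0 ^ 2) μ := by fun_prop
  have cont : ContinuousOn (fun x => ∫ t, max (t - x) 0 ^ 2 ∂μ) (Set.Ici 0) :=
    continuousOn_of_dominated (fun x _ => meas x) dominated hμ.integrable_sq
      (.of_forall fun t => by fun_prop)
  have tendsto_zero : Tendsto (fun x => ∫ t, max (t - x) 0 ^ 2 ∂μ) atTop (𝓝 0) := by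
    have := tendsto_integral_filter_of_dominated_convergence (f := fun _ => (0 : ℝ)) _
      (.of_forall meas) ((eventually_ge_atTop 0).mono dominated) hμ.integrable_sq
      (.of_forall fun t => tendsto_const_nhds.congr' ?_)
    · simpa only [integral_zero] using this
    · filter_upwards [eventually_ge_atTop t] with x hx
      simp [max_eq_right (sub_nonpos.2 hx)]
  have value_zero : ∫ t, max (t - 0) 0 ^ 2 ∂μ = ∫ t, t ^ 2 ∂μ := by
    refine integral_congr_ae ?_
    filter_upwards [hμ_nonneg] with t ht
    simp [max_eq_left ht]
  exact isPreconnected_Ici.intermediate_value_Ioc Set.self_mem_Ici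
    (le_principal_iff.2 (Ici_mem_atTop 0)) cont tendsto_zero (value_zero ▸ hδ)

variable [IsFiniteMeasure μ]

theorem integrable_min (hμ : Integrable id μ) (x : ℝ) : Integrable (fun t => min t x) μ :=
  hμ.inf (integrable_const x)

theorem integrable_min_sq (hμ : MemLp id 2 μ) (x : ℝ) : Integrable (fun t => min t x ^ 2) μ :=
  (hμ.inf (memLp_const x)).integrable_sq

theorem memLp_two_max_sub (hμ : MemLp id 2 μ) (x : ℝ) : MemLp (fun t => max (t - x) 0) 2 μ :=
  (hμ.sub (memLp_const x)).pos_part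

theorem integral_min_eq_sub (hμ : Integrable id μ) (x : ℝ) :
    ∫ t, min t x ∂μ = ∫ t, t ∂μ - ∫ t, max (t - x) 0 ∂μ := by
  have id_int : Integrable (fun t => t) μ := hμ
  have excess_int : Integrable (fun t => max (t - x) 0) μ :=
    (hμ.sub (integrable_const x)).pos_part
  rw [← integral_sub id_int excess_int]
  congr with t
  grind

theorem integral_sq_le_two_mul_integral_min_sq_add (hμ : MemLp id 2 μ) (x : ℝ) :
    ∫ t, t ^ 2 ∂μ ≤ 2 * (∫ t, min t x ^ 2 ∂μ) + 2 * ∫ t, max (t - x) 0 ^ 2 ∂μ := by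
  have min_int := (integrable_min_sq hμ x).const_mul 2
  have max_int := (memLp_two_max_sub hμ x).integrable_sq.const_mul 2
  rw [← integral_const_mul, ← integral_const_mul, ← integral_add min_int max_int]
  refine integral_mono hμ.integrable_sq (min_int.add max_int) fun t => ?_
  have split : t = min t x + max (t - x) 0 := by grind
  have := add_sq_le (a := min t x) (b := max (t - x) 0)
  rw [← split] at this
  simpa only [mul_add] using this

theorem sq_integral_max_sub_le (hμ : MemLp id 2 μ) (x : ℝ) :
    (∫ t, max (t - x) 0 ∂μ) ^ 2 ≤ μ.real (Set.Ioi x) * ∫ t, max (t - x) 0 ^ 2 ∂μ := by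
  have max_memLp := memLp_two_max_sub hμ x
  rw [← integral_indicator_one measurableSet_Ioi]
  refine sq_integral_le_integral_mul_integral (max_memLp.integrable one_le_two)
    ((integrable_const 1).indicator measurableSet_Ioi) max_memLp.integrable_sq
    (.of_forall fun t => Set.indicator_nonneg (fun _ _ => zero_le_one) t)
    (.of_forall fun t => sq_nonneg _) (.of_forall fun t => ?_)
  by_cases ht : x < t
  · simp [ht]
  · simp [ht, max_eq_right (sub_nonpos.2 (not_lt.1 ht))]

theorem measureReal_Ioi_pos_of_integral_max_sub_sq_pos {x : ℝ} (h : 0 < ∫ t, max (t - x) 0 ^ 2 ∂μ) :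
    0 < μ.real (Set.Ioi x) := by
  contrapose! h
  have null : μ (Set.Ioi x) = 0 :=
    (measureReal_eq_zero_iff).1 (h.antisymm measureReal_nonneg)
  refine (integral_eq_zero_of_ae ?_).le
  filter_upwards [measure_eq_zero_iff_ae_notMem.1 null] with t ht
  simp [max_eq_right (sub_nonpos.2 (Set.notMem_Ioi.1 ht))]

theorem integral_min_sq_pos (hμ : MemLp id 2 μ) (hmean : 0 < ∫ t, t ∂μ) {x : ℝ} (hx : 0 < x) :
    0 < ∫ t, min t x ^ 2 ∂μ := by
  refine (integral_nonneg fun t => sq_nonneg _).lt_of_ne' fun h => hmean.ne' ?_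
  rw [integral_eq_zero_iff_of_nonneg (fun t => sq_nonneg _) (integrable_min_sq hμ x)] at h
  refine integral_eq_zero_of_ae ?_
  filter_upwards [h] with t ht
  have : min t x = 0 := by simpa using ht
  change t = 0
  grind

theorem sq_mul_integral_min_one_sq_le (hμ_nonneg : ∀ᵐ t ∂μ, 0 ≤ t) (hμ : MemLp id 2 μ) {x : ℝ}
    (hx : 0 ≤ x) :
    x ^ 2 * (∫ t, min t 1 ^ 2 ∂μ) ≤ (1 + x ^ 2) * ∫ t, min t x ^ 2 ∂μ := by
  rw [← integral_const_mul, ← integral_const_mul]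
  refine integral_mono_ae ((integrable_min_sq hμ 1).const_mul _)
    ((integrable_min_sq hμ x).const_mul _) ?_
  filter_upwards [hμ_nonneg] with t ht
  have min_one_nonneg : 0 ≤ min t 1 := le_min ht zero_le_one
  rcases le_total x 1 with hx1 | hx1
  · have : x * min t 1 ≤ min t x :=
      le_min ((mul_le_of_le_one_left min_one_nonneg hx1).trans (min_le_left _ _))
        (mul_le_of_le_one_right hx (min_le_right _ _))
    nlinarith [pow_le_pow_left₀ (mul_nonneg hx min_one_nonneg) this 2, sq_nonneg (x * min t x)]
  · have : min t 1 ≤ min t x := min_le_min_left t hx1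
    nlinarith [pow_le_pow_left₀ min_one_nonneg this 2, sq_nonneg (min t x), sq_nonneg x]

end TruncatedMoments

section ResponseTime

variable {μ : Measure ℝ} {lam : ℝ}

theorem continuous_fbLoad (x : ℝ) : Continuous fun lam => fbLoad μ lam x :=
  continuous_mul_const _

theorem fbWaiting_nonneg (hlam : 0 ≤ lam) (x : ℝ) : 0 ≤ fbWaiting μ lam x :=
  div_nonneg (mul_nonneg hlam (integral_nonneg fun t => sq_nonneg _)) (by positivity)

variable [IsFiniteMeasure μ]

theorem fbLoad_mono (hμ : Integrable id μ) (hlam : 0 ≤ lam) : Monotone (fbLoad μ lam) :=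
  fun x y hxy => mul_le_mul_of_nonneg_left (integral_mono (integrable_min hμ x)
    (integrable_min hμ y) fun t => min_le_min_left t hxy) hlam

theorem fbLoad_le (hμ : Integrable id μ) (hlam : 0 ≤ lam) (x : ℝ) :
    fbLoad μ lam x ≤ lam * ∫ t, t ∂μ :=
  mul_le_mul_of_nonneg_left
    (integral_mono (integrable_min hμ x) hμ fun t => min_le_left t x) hlam

theorem measurable_fbLoad : Measurable (fbLoad μ lam) :=
  ((StronglyMeasurable.integral_prod_right (f := fun x t : ℝ => min t x)
    (by fun_prop)).measurable).const_mul lam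

theorem measurable_fbWaiting : Measurable (fbWaiting μ lam) := by
  have num : Measurable fun x => ∫ t, min t x ^ 2 ∂μ :=
    (StronglyMeasurable.integral_prod_right (f := fun x t : ℝ => min t x ^ 2)
      (by fun_prop)).measurable
  exact (num.const_mul lam).div (((measurable_fbLoad.const_sub 1).pow_const 2).const_mul 2)

theorem integrable_fbResidence (hμ : Integrable id μ) (hlam : 0 ≤ lam)
    (hload : lam * ∫ t, t ∂μ < 1) : Integrable (fbResidence μ lam) μ := by
  refine (hμ.norm.const_mul (1 - lam * ∫ t, t ∂μ)⁻¹).mono'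
    (measurable_id.div (measurable_fbLoad.const_sub 1)).aestronglyMeasurable
    (.of_forall fun x => ?_)
  have hle := fbLoad_le hμ hlam x
  have : 0 < 1 - lam * ∫ t, t ∂μ := sub_pos.2 hload
  rw [fbResidence, norm_div, div_eq_inv_mul, Real.norm_of_nonneg (by linarith), id]
  gcongr

variable (hμ_nonneg : ∀ᵐ t ∂μ, 0 ≤ t) (hμ : MemLp id 2 μ)
include hμ_nonneg hμ

theorem integrable_fbWaiting (hlam : 0 ≤ lam) (hload : lam * ∫ t, t ∂μ < 1) :
    Integrable (fbWaiting μ lam) μ := by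
  refine (integrable_const (lam * (∫ t, t ^ 2 ∂μ) / (2 * (1 - lam * ∫ t, t ∂μ) ^ 2))).mono'
    measurable_fbWaiting.aestronglyMeasurable ?_
  filter_upwards [hμ_nonneg] with x hx
  have num_le : ∫ t, min t x ^ 2 ∂μ ≤ ∫ t, t ^ 2 ∂μ := by
    refine integral_mono_ae (integrable_min_sq hμ x) hμ.integrable_sq ?_
    filter_upwards [hμ_nonneg] with t ht
    exact pow_le_pow_left₀ (le_min ht hx) (min_le_left t x) 2
  have hle := fbLoad_le (hμ.integrable one_le_two) hlam x
  have : 0 < 1 - lam * ∫ t, t ∂μ := sub_pos.2 hload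
  have : 0 ≤ ∫ t, t ^ 2 ∂μ := integral_nonneg fun t => sq_nonneg t
  rw [Real.norm_of_nonneg (fbWaiting_nonneg hlam x), fbWaiting]
  gcongr

theorem fbWaiting_monotoneOn (hlam : 0 ≤ lam) (hload : lam * ∫ t, t ∂μ < 1) :
    MonotoneOn (fbWaiting μ lam) (Set.Ici 0) := by
  intro x hx y _ hxy
  have num_le : ∫ t, min t x ^ 2 ∂μ ≤ ∫ t, min t y ^ 2 ∂μ := by
    refine integral_mono_ae (integrable_min_sq hμ x) (integrable_min_sq hμ y) ?_
    filter_upwards [hμ_nonneg] with t ht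
    exact pow_le_pow_left₀ (le_min ht hx) (min_le_min_left t hxy) 2
  have load_le := fbLoad_mono (hμ.integrable one_le_two) hlam hxy
  have : 0 < 1 - fbLoad μ lam y := by
    linarith [fbLoad_le (hμ.integrable one_le_two) hlam y]
  have : 0 ≤ ∫ t, min t y ^ 2 ∂μ := integral_nonneg fun t => sq_nonneg _
  unfold fbWaiting
  gcongr

theorem fbWaiting_mul_measureReal_Ioi_le (hlam : 0 ≤ lam) (hload : lam * ∫ t, t ∂μ < 1) {x : ℝ}
    (hx : 0 ≤ x) : fbWaiting μ lam x * μ.real (Set.Ioi x) ≤ ∫ y, fbWaiting μ lam y ∂μ := by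
  refine le_trans (mul_le_mul_of_nonneg_left (measureReal_mono fun y (hy : x < y) => ?_)
    (fbWaiting_nonneg hlam x)) (mul_meas_ge_le_integral_of_nonneg
      (.of_forall (fbWaiting_nonneg hlam)) (integrable_fbWaiting hμ_nonneg hμ hlam hload) _)
  exact fbWaiting_monotoneOn hμ_nonneg hμ hlam hload hx (hx.trans hy.le) hy.le

theorem fbResidence_sq_le (hmean : 0 < ∫ t, t ∂μ) (hlam : 0 < lam) {x : ℝ} (hx : 0 ≤ x) :
    fbResidence μ lam x ^ 2
      ≤ fbWaiting μ lam x * (2 / (lam * ∫ t, min t 1 ^ 2 ∂μ) * (1 + x ^ 2)) := by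
  have min_one_pos := integral_min_sq_pos hμ hmean one_pos
  calc fbResidence μ lam x ^ 2
      = x ^ 2 * (∫ t, min t 1 ^ 2 ∂μ)
          / ((∫ t, min t 1 ^ 2 ∂μ) * (1 - fbLoad μ lam x) ^ 2) := by
        rw [fbResidence]; field_simp
    _ ≤ (1 + x ^ 2) * (∫ t, min t x ^ 2 ∂μ)
          / ((∫ t, min t 1 ^ 2 ∂μ) * (1 - fbLoad μ lam x) ^ 2) := by
        exact div_le_div_of_nonneg_right (sq_mul_integral_min_one_sq_le hμ_nonneg hμ hx)
          (by positivity)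
    _ = fbWaiting μ lam x * (2 / (lam * ∫ t, min t 1 ^ 2 ∂μ) * (1 + x ^ 2)) := by
        rw [fbWaiting]; field_simp

theorem sq_integral_fbResidence_le (hmean : 0 < ∫ t, t ∂μ) (hlam : 0 < lam)
    (hload : lam * ∫ t, t ∂μ < 1) :
    (∫ x, fbResidence μ lam x ∂μ) ^ 2 ≤ (∫ x, fbWaiting μ lam x ∂μ)
      * (2 / (lam * ∫ t, min t 1 ^ 2 ∂μ) * ∫ t, (1 + t ^ 2) ∂μ) := by
  have min_one_pos := integral_min_sq_pos hμ hmean one_pos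
  rw [← integral_const_mul]
  exact sq_integral_le_integral_mul_integral
    (integrable_fbResidence (hμ.integrable one_le_two) hlam.le hload)
    (integrable_fbWaiting hμ_nonneg hμ hlam.le hload)
    (((integrable_const 1).add hμ.integrable_sq).const_mul _)
    (.of_forall (fbWaiting_nonneg hlam.le)) (.of_forall fun x => by positivity)
    (hμ_nonneg.mono fun x hx => fbResidence_sq_le hμ_nonneg hμ hmean hlam hx)

end ResponseTime

section HeavyTraffic

theorem eventually_pos_and_mul_lt_one {m : ℝ} (hm : 0 < m) :
    ∀ᶠ lam in 𝓝[<] (1 / m), 0 < lam ∧ lam * m < 1 := by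
  filter_upwards [Ioo_mem_nhdsLT (one_div_pos.2 hm)] with lam hlam
  exact ⟨hlam.1, (lt_div_iff₀ hm).1 hlam.2⟩

variable {μ : Measure ℝ} [IsFiniteMeasure μ] {m : ℝ}

theorem one_sub_fbLoad_one_div_mean (hμ : Integrable id μ) (hm_def : m = ∫ t, t ∂μ) (hm : 0 < m)
    (x : ℝ) : 1 - fbLoad μ (1 / m) x = (∫ t, max (t - x) 0 ∂μ) / m := by
  rw [fbLoad, integral_min_eq_sub hμ, ← hm_def]
  field_simp
  ring

variable (hμ_nonneg : ∀ᵐ t ∂μ, 0 ≤ t) (hμ : MemLp id 2 μ) (hm_def : m = ∫ t, t ∂μ) (hm : 0 < m)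
include hμ_nonneg hμ hm_def hm

theorem eventually_le_integral_fbWaiting {δ : ℝ}
    (hδ : δ ∈ Set.Ioc 0 ((∫ t, t ^ 2 ∂μ) / 4)) :
    ∀ᶠ lam in 𝓝[<] (1 / m),
      m * (∫ t, t ^ 2 ∂μ) / 16 * δ⁻¹ ≤ ∫ x, fbWaiting μ lam x ∂μ := by
  have hδ_pos : 0 < δ := hδ.1
  obtain ⟨x, hx, hxδ⟩ := exists_integral_max_sub_sq_eq hμ_nonneg hμ (δ := δ)
    ⟨hδ_pos, by linarith [hδ.2]⟩
  have tail_pos : 0 < μ.real (Set.Ioi x) :=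
    measureReal_Ioi_pos_of_integral_max_sub_sq_pos (hxδ ▸ hδ_pos)
  have excess_sq_le := hxδ ▸ sq_integral_max_sub_le hμ x
  have num_ge : (∫ t, t ^ 2 ∂μ) / 4 ≤ ∫ t, min t x ^ 2 ∂μ := by
    linarith [integral_sq_le_two_mul_integral_min_sq_add hμ x, hδ.2]
  have slack_sq_lt : ∀ᶠ lam in 𝓝[<] (1 / m),
      (1 - fbLoad μ lam x) ^ 2 < 2 * μ.real (Set.Ioi x) * δ / m * lam := by
    have load_tendsto :
        Tendsto (fun lam => fbLoad μ lam x) (𝓝[<] (1 / m)) (𝓝 (fbLoad μ (1 / m) x)) :=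
      (continuous_fbLoad x).continuousWithinAt
    refine ((load_tendsto.const_sub 1).pow 2).eventually_lt
      ((tendsto_nhdsWithin_of_tendsto_nhds tendsto_id).const_mul _) ?_
    rw [one_sub_fbLoad_one_div_mean (hμ.integrable one_le_two) hm_def hm, div_pow,
      div_mul_div_comm, mul_one, ← sq]
    have := mul_pos tail_pos hδ_pos
    gcongr
    linarith
  filter_upwards [slack_sq_lt, eventually_pos_and_mul_lt_one hm] with lam hslack ⟨hlam, hload⟩
  rw [hm_def] at hload
  refine le_trans ?_ (fbWaiting_mul_measureReal_Ioi_le hμ_nonneg hμ hlam.le hload hx)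
  have slack_pos : 0 < 1 - fbLoad μ lam x := by
    linarith [fbLoad_le (hμ.integrable one_le_two) hlam.le x]
  have : 0 ≤ ∫ t, t ^ 2 ∂μ := integral_nonneg fun t => sq_nonneg t
  calc m * (∫ t, t ^ 2 ∂μ) / 16 * δ⁻¹
      = lam * ((∫ t, t ^ 2 ∂μ) / 4) / (2 * (2 * μ.real (Set.Ioi x) * δ / m * lam))
          * μ.real (Set.Ioi x) := by field_simp; ring
    _ ≤ fbWaiting μ lam x * μ.real (Set.Ioi x) := by rw [fbWaiting]; gcongr

theorem tendsto_integral_fbWaiting_atTop :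
    Tendsto (fun lam => ∫ x, fbWaiting μ lam x ∂μ) (𝓝[<] (1 / m)) atTop := by
  have sq_int_pos : 0 < ∫ t, t ^ 2 ∂μ := by
    have := integral_min_sq_pos hμ (hm_def ▸ hm) one_pos
    refine this.trans_le (integral_mono_ae (integrable_min_sq hμ 1) hμ.integrable_sq ?_)
    filter_upwards [hμ_nonneg] with t ht
    exact pow_le_pow_left₀ (le_min ht zero_le_one) (min_le_left t 1) 2
  have lower_bound_atTop : Tendsto (fun δ : ℝ => m * (∫ t, t ^ 2 ∂μ) / 16 * δ⁻¹) (𝓝[>] 0) atTop :=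
    tendsto_inv_nhdsGT_zero.const_mul_atTop (by positivity)
  refine tendsto_atTop.2 fun M => ?_
  obtain ⟨δ, hMδ, hδ⟩ := ((lower_bound_atTop.eventually_ge_atTop M).and
    (Ioc_mem_nhdsGT (show 0 < (∫ t, t ^ 2 ∂μ) / 4 by positivity))).exists
  exact (eventually_le_integral_fbWaiting hμ_nonneg hμ hm_def hm hδ).mono fun _ => hMδ.trans

theorem tendsto_integral_fbResidence_div_integral_fbWaiting :
    Tendsto (fun lam => (∫ x, fbResidence μ lam x ∂μ) / ∫ x, fbWaiting μ lam x ∂μ)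
      (𝓝[<] (1 / m)) (𝓝 0) := by
  have waiting_atTop := tendsto_integral_fbWaiting_atTop hμ_nonneg hμ hm_def hm
  have min_one_pos := integral_min_sq_pos hμ (hm_def ▸ hm) one_pos
  have factor_tendsto : Tendsto
      (fun lam => 2 / (lam * ∫ t, min t 1 ^ 2 ∂μ) * ∫ t, (1 + t ^ 2) ∂μ) (𝓝[<] (1 / m))
      (𝓝 (2 / (1 / m * ∫ t, min t 1 ^ 2 ∂μ) * ∫ t, (1 + t ^ 2) ∂μ)) :=
    (tendsto_const_nhds.div ((tendsto_nhdsWithin_of_tendsto_nhds tendsto_id).mul_const _)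
      (by positivity)).mul_const _
  have bound_tendsto := (factor_tendsto.div_atTop waiting_atTop).sqrt
  rw [Real.sqrt_zero] at bound_tendsto
  refine squeeze_zero_norm' ?_ bound_tendsto
  filter_upwards [eventually_pos_and_mul_lt_one hm, waiting_atTop.eventually_gt_atTop 0]
    with lam ⟨hlam, hload⟩ waiting_pos
  rw [hm_def] at hload
  refine Real.abs_le_sqrt ?_
  rw [div_pow, div_le_div_iff₀ (by positivity) waiting_pos, sq (∫ x, fbWaiting μ lam x ∂μ)]
  have := mul_le_mul_of_nonneg_right
    (sq_integral_fbResidence_le hμ_nonneg hμ (hm_def ▸ hm) hlam hload) waiting_pos.le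
  linarith

end HeavyTraffic

theorem fbk_ratio_tendsto_one_general (μ : Measure ℝ) [IsFiniteMeasure μ]
    (hμ_nonneg : ∀ᵐ t ∂μ, 0 ≤ t) (hμ : MemLp id 2 μ) {m : ℝ} (hm_def : m = ∫ t, t ∂μ) (hm : 0 < m)
    (c : ℝ) :
    Tendsto (fun lam => (∫ x, fbWaiting μ lam x + c * fbResidence μ lam x ∂μ)
      / ∫ x, fbWaiting μ lam x + fbResidence μ lam x ∂μ) (𝓝[<] (1 / m)) (𝓝 1) := by
  have ratio_tendsto := tendsto_integral_fbResidence_div_integral_fbWaiting hμ_nonneg hμ hm_def hm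
  have limit : Tendsto (fun lam =>
      (1 + c * ((∫ x, fbResidence μ lam x ∂μ) / ∫ x, fbWaiting μ lam x ∂μ))
        / (1 + (∫ x, fbResidence μ lam x ∂μ) / ∫ x, fbWaiting μ lam x ∂μ))
      (𝓝[<] (1 / m)) (𝓝 1) := by
    simpa [Pi.div_def] using ((ratio_tendsto.const_mul c).const_add 1).div
      (ratio_tendsto.const_add 1) (by norm_num)
  refine limit.congr' ?_
  filter_upwards [eventually_pos_and_mul_lt_one hm,
    (tendsto_integral_fbWaiting_atTop hμ_nonneg hμ hm_def hm).eventually_gt_atTop 0]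
    with lam ⟨hlam, hload⟩ waiting_pos
  rw [hm_def] at hload
  have waiting_int := integrable_fbWaiting hμ_nonneg hμ hlam.le hload
  have residence_int := integrable_fbResidence (hμ.integrable one_le_two) hlam.le hload
  rw [integral_add waiting_int (residence_int.const_mul c), integral_const_mul,
    integral_add waiting_int residence_int]
  field_simp

/-- The law on `(0, ∞)` with density `f`. It is a probability measure when `f` is nonnegative with
integral one; the negative part of `f` is discarded. -/
noncomputable def serviceLaw (f : ℝ → ℝ) : Measure ℝ :=
  (volume.restrict (Set.Ioi 0)).withDensity fun t => ENNReal.ofReal (f t)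

section ServiceLaw

variable {f : ℝ → ℝ}

theorem ae_serviceLaw_pos : ∀ᵐ t ∂serviceLaw f, 0 < t :=
  (withDensity_absolutelyContinuous _ _).ae_le (ae_restrict_mem measurableSet_Ioi)

theorem isFiniteMeasure_serviceLaw (hf : IntegrableOn f (Set.Ioi 0)) :
    IsFiniteMeasure (serviceLaw f) :=
  isFiniteMeasure_withDensity_ofReal hf.2

variable (hf_meas : Measurable f) (hf_nonneg : ∀ x, 0 ≤ f x)
include hf_meas hf_nonneg

theorem integral_serviceLaw (g : ℝ → ℝ) :
    ∫ t, g t ∂serviceLaw f = ∫ t in Set.Ioi 0, g t * f t := by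
  rw [serviceLaw, integral_withDensity_eq_integral_toReal_smul hf_meas.ennreal_ofReal
    (.of_forall fun _ => ENNReal.ofReal_lt_top)]
  simp only [ENNReal.toReal_ofReal (hf_nonneg _), smul_eq_mul, mul_comm]

theorem fbWaiting_serviceLaw : fbWaiting (serviceLaw f) = WbarFB f := by
  ext lam x
  simp only [fbWaiting, fbLoad, WbarFB, rhoBar, integral_serviceLaw hf_meas hf_nonneg]

theorem fbResidence_serviceLaw : fbResidence (serviceLaw f) = RbarFB f := by
  ext lam x
  simp only [fbResidence, fbLoad, RbarFB, rhoBar, integral_serviceLaw hf_meas hf_nonneg]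

theorem measureReal_serviceLaw_Ioi {x : ℝ} (hx : 0 ≤ x) :
    (serviceLaw f).real (Set.Ioi x) = tailS f x := by
  have inter_eq : Set.Ioi 0 ∩ Set.Ioi x = Set.Ioi x :=
    Set.inter_eq_self_of_subset_right (Set.Ioi_subset_Ioi hx)
  calc (serviceLaw f).real (Set.Ioi x)
      = ∫ t in Set.Ioi 0, (Set.Ioi x).indicator 1 t * f t := by
        rw [← integral_indicator_one measurableSet_Ioi, integral_serviceLaw hf_meas hf_nonneg]
    _ = ∫ t in Set.Ioi 0, (Set.Ioi x).indicator f t := by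
        simp only [Set.indicator_apply, Pi.one_apply, ite_mul, one_mul, zero_mul]
    _ = tailS f x := by rw [setIntegral_indicator measurableSet_Ioi, inter_eq, tailS]

theorem memLp_two_serviceLaw_of_potter (hf : IntegrableOn f (Set.Ioi 0)) {C ε x₀ : ℝ}
    (hε : 0 < ε) (hx₀ : 0 < x₀)
    (hpotter : ∀ γ ≥ 1, tailS f (γ * x₀) ≤ C * γ ^ (-(2 + ε)) * tailS f x₀) :
    MemLp id 2 (serviceLaw f) := by
  have := isFiniteMeasure_serviceLaw hf
  have tail_le : ∀ t ≥ x₀, (serviceLaw f).real (Set.Ioi t)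
      ≤ C * x₀ ^ (2 + ε) * tailS f x₀ * t ^ (-(2 + ε)) := fun t ht => by
    have ht_pos : 0 < t := hx₀.trans_le ht
    have := hpotter (t / x₀) ((one_le_div hx₀).2 ht)
    rw [div_mul_cancel₀ _ hx₀.ne', Real.div_rpow ht_pos.le hx₀.le, Real.rpow_neg hx₀.le,
      div_inv_eq_mul] at this
    rw [measureReal_serviceLaw_Ioi hf_meas hf_nonneg ht_pos.le]
    linarith
  have sq_int := integrable_rpow_of_measureReal_lt_le_rpow (X := id) aemeasurable_id
    (ae_serviceLaw_pos.mono fun t => le_of_lt) two_pos (lt_add_of_pos_right 2 hε) hx₀ tail_le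
  exact (memLp_two_iff_integrable_sq aestronglyMeasurable_id).2
    (by simpa only [Real.rpow_two] using sq_int)

end ServiceLaw

/-- **Theorem 6.12.** Fix an integer `k ≥ 1`. If `S` is unbounded with tail
of upper Matuszewska index less than `−2` (Potter-type bound), then the
paper's explicit upper bound on the `k`-server FB mean response time is
asymptotically tight against the single-server FB mean response time:
`lim_{λ → (1/m)⁻} (∫₀^∞ (W̄_λ(x) + (2k−1) R̄_λ(x)) f(x) dx) / T̄^FB(λ) = 1`. -/
theorem fbk_ratio_tendsto_one
    (f : ℝ → ℝ) (m : ℝ) (k : ℕ) (hk : 1 ≤ k)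
    (hf_meas : Measurable f)
    (hf_nonneg : ∀ x, 0 ≤ f x)
    (hf_zero : ∀ x ≤ 0, f x = 0)
    (hf_prob : ∫ t in Set.Ioi (0:ℝ), f t = 1)
    (hm_int : Integrable (fun t => t * f t) (volume.restrict (Set.Ioi 0)))
    (hm_def : m = ∫ t in Set.Ioi (0:ℝ), t * f t)
    (hm_pos : 0 < m)
    (hunbounded : ∀ x > (0:ℝ), 0 < tailS f x)
    (hmatuszewska : ∃ C > (0:ℝ), ∃ ε > (0:ℝ), ∃ x₀ > (0:ℝ),
      ∀ x ≥ x₀, ∀ γ ≥ (1:ℝ), tailS f (γ * x) ≤ C * γ ^ (-(2 + ε)) * tailS f x) :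
    Tendsto (fun lam =>
        (∫ x in Set.Ioi (0:ℝ),
          (WbarFB f lam x + (2 * (k : ℝ) - 1) * RbarFB f lam x) * f x)
          / TfbMean f lam)
      (nhdsWithin (1/m) (Set.Iio (1/m))) (nhds 1) := by
  obtain ⟨C, -, ε, hε, x₀, hx₀, hpotter⟩ := hmatuszewska
  have hf_int : IntegrableOn f (Set.Ioi 0) :=
    Integrable.of_integral_ne_zero (hf_prob ▸ one_ne_zero)
  have := isFiniteMeasure_serviceLaw hf_int
  have hμ := memLp_two_serviceLaw_of_potter hf_meas hf_nonneg hf_int hε hx₀ (hpotter x₀ le_rfl)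
  have hm_law := hm_def.trans (integral_serviceLaw hf_meas hf_nonneg fun t => t).symm
  have limit := fbk_ratio_tendsto_one_general (serviceLaw f)
    (ae_serviceLaw_pos.mono fun t => le_of_lt) hμ hm_law hm_pos (2 * k - 1)
  simpa only [TfbMean, integral_serviceLaw hf_meas hf_nonneg,
    fbWaiting_serviceLaw hf_meas hf_nonneg, fbResidence_serviceLaw hf_meas hf_nonneg] using limit
end
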